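/- arXiv:2403.07096 — 2 statements merged into one kernel-verified Lean document; each statement's English description precedes it below -/
import Mathlib

section
/- There is a positive constant C depending only on the dimension n such that for every u : ℝⁿ → ℝ of class C² with compact support and every i ∈ {1, …, n}, there exists a countable family 𝒫 of measurable subsets of ℝⁿ, each of finite positive Lebesgue measure, satisfying: (i) for every x ∈ ℝⁿ, |∂u/∂x_i(x)|² ≤ C · Σ_{P∈𝒫} (⨍_P |∂²u/∂x_i²(t)| dt) · (⨍_P |u(t)| dt) · χ_P(x); and (ii) Σ_{P∈𝒫} χ_P(x) ≤ 5 for every x ∈ ℝⁿ. -/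
open MeasureTheory ENNReal Set

/-- The `j`-th iterated partial derivative of `u : ℝⁿ → ℝ` in the `i`-th
coordinate direction. -/
noncomputable def pderivIter (n : ℕ) (i : Fin n) (j : ℕ)
    (u : (Fin n → ℝ) → ℝ) : (Fin n → ℝ) → ℝ :=
  (fun v x => fderiv ℝ v x (Pi.single i 1))^[j] u

lemma measAll {α E : Type*} [MeasurableSpace α] [Countable E] (Q : E → α → Prop)
    (h : ∀ e, MeasurableSet {s | Q e s}) : MeasurableSet {s | ∀ e, Q e s} := by
  have : {s | ∀ e, Q e s} = ⋂ e, {s | Q e s} := by ext s; simp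
  rw [this]
  exact MeasurableSet.iInter h

/-- measurable first choice -/
lemma exists_first {α E : Type*} [MeasurableSpace α] [Encodable E] (R : α → E → Prop) (e0 : E)
    (hR : ∀ e, MeasurableSet {s | R s e}) :
    ∃ F : α → E, (∀ s, (∃ e, R s e) → R s (F s)) ∧ (∀ s, (¬ ∃ e, R s e) → F s = e0) ∧
      ∀ e, MeasurableSet {s | F s = e} := by
  classical
  have key : ∀ s, ∃ e, ((R s e ∧ ∀ e', R s e' → Encodable.encode e ≤ Encodable.encode e') ∨
      ((∀ e', ¬ R s e') ∧ e = e0)) := by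
    intro s
    by_cases h : ∃ e, R s e
    · obtain ⟨e, he, hmin⟩ := (measure (fun e : E => Encodable.encode e)).wf.has_min
        {e | R s e} h
      exact ⟨e, Or.inl ⟨he, fun e' he' => not_lt.1 (hmin e' he')⟩⟩
    · push Not at h
      exact ⟨e0, Or.inr ⟨h, rfl⟩⟩
  choose F hF using key
  refine ⟨F, ?_, ?_, ?_⟩
  · rintro s ⟨e, he⟩
    rcases hF s with h | h
    · exact h.1
    · exact absurd he (h.1 e)
  · intro s h
    rcases hF s with h' | h'
    · exact absurd ⟨_, h'.1⟩ h
    · exact h'.2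
  · intro e
    have : {s | F s = e} = {s | (R s e ∧ ∀ e', R s e' → Encodable.encode e ≤ Encodable.encode e') ∨
      ((∀ e', ¬ R s e') ∧ e = e0)} := by
      ext s
      simp only [mem_ofPred_eq]
      constructor
      · rintro rfl; exact hF s
      · intro h
        rcases hF s with h1 | h1 <;> rcases h with h2 | h2
        · exact Encodable.encode_injective (le_antisymm (h1.2 _ h2.1) (h2.2 _ h1.1))
        · exact absurd h1.1 (h2.1 _)
        · exact absurd h2.1 (h1.1 _)
        · rw [h1.2, h2.2]
    rw [this]
    have : Countable E := Encodable.countable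
    refine MeasurableSet.union ?_ ?_
    · refine (hR e).inter ?_
      refine measAll _ fun e' => ?_
      by_cases h : Encodable.encode e ≤ Encodable.encode e'
      · simp [h]
      · simp only [h, imp_false]; exact (hR e').compl
    · refine MeasurableSet.inter ?_ (MeasurableSet.const _)
      exact measAll _ fun e' => (hR e').compl

/-- One step of the subdivision; `true` flags good intervals. -/
def StepRel {α : Type*} (Bad Good : α → ℚ → ℚ → Prop) (s : α) (d : ℚ × ℚ × Bool)
    (p : (ℚ × ℚ × Bool) × (ℚ × ℚ × Bool)) : Prop :=
  (d.2.2 = false ∧ d.1 < d.2.1 ∧ p.1.1 = d.1 ∧ p.2.2.1 = d.2.1 ∧ p.2.1 ≤ p.1.2.1 ∧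
    p.1.2.1 ≤ d.2.1 ∧ d.1 ≤ p.2.1 ∧ p.1.1 < p.1.2.1 ∧ p.2.1 < p.2.2.1 ∧
    (p.1.2.2 = false → p.1.2.1 - p.1.1 ≤ (d.2.1 - d.1) / 2) ∧
    (p.2.2.2 = false → p.2.2.1 - p.2.1 ≤ (d.2.1 - d.1) / 2) ∧
    (p.1.2.2 = false ∨ p.2.2.2 = false → p.1.2.1 ≤ p.2.1)) ∧
  ((p.1.2.2 = true → Good s p.1.1 p.1.2.1) ∧ (p.1.2.2 = false → Bad s p.1.1 p.1.2.1) ∧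
  (p.2.2.2 = true → Good s p.2.1 p.2.2.1) ∧ (p.2.2.2 = false → Bad s p.2.1 p.2.2.1))

/-- membership in the interval of a node -/
def InI (t : ℝ) (d : ℚ × ℚ × Bool) : Prop := (d.1 : ℝ) ≤ t ∧ t < (d.2.1 : ℝ)

lemma tree_exists {α : Type*} [MeasurableSpace α] (Bad Good : α → ℚ → ℚ → Prop)
    (hB : ∀ a b, MeasurableSet {s | Bad s a b}) (hG : ∀ a b, MeasurableSet {s | Good s a b})
    (A B : ℚ) (hroot : ∀ s, Bad s A B)
    (hstep : ∀ s a b, a < b → Bad s a b → ∃ p, StepRel Bad Good s (a, b, false) p) :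
    ∃ N : List Bool → α → ℚ × ℚ × Bool,
      (∀ σ d, MeasurableSet {s | N σ s = d}) ∧
      (∀ σ s t, InI t (N σ s) → (N σ s).2.2 = true → Good s (N σ s).1 (N σ s).2.1) ∧
      (∀ s (t : ℝ), (A : ℝ) ≤ t → t < B → (∃ σ, InI t (N σ s) ∧ (N σ s).2.2 = true) ∨
        ∀ k : ℕ, ∃ a b : ℚ, Bad s a b ∧ (a : ℝ) ≤ t ∧ t < b ∧ b - a ≤ (B - A) / 2 ^ k) ∧
      (∀ s t c σ τ, InI t (N (c :: σ) s) → InI t (N (c :: τ) s) →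
        (N (c :: σ) s).2.2 = true → (N (c :: τ) s).2.2 = true → σ = τ) ∧
      (∀ s, (N [] s).2.2 = false) := by
  classical
  have hmeasStep : ∀ d p, MeasurableSet {s | StepRel Bad Good s d p} := by
    intro d p
    unfold StepRel
    refine MeasurableSet.inter (MeasurableSet.const _) ?_
    have aux : ∀ (b c : Bool) (Q : α → Prop), MeasurableSet {s | Q s} →
        MeasurableSet {s | b = c → Q s} := by
      intro b c Q hQ
      by_cases h : b = c
      · simpa [h] using hQ
      · simp [h]
    exact (aux _ _ _ (hG _ _)).inter ((aux _ _ _ (hB _ _)).inter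
      ((aux _ _ _ (hG _ _)).inter (aux _ _ _ (hB _ _))))
  let e0 : ℚ × ℚ × Bool := (0, 0, false)
  have hF := fun d => exists_first (fun s p => StepRel Bad Good s d p) (e0, e0) (hmeasStep d)
  choose F hF1 hF2 hF3 using hF
  let N : List Bool → α → ℚ × ℚ × Bool := fun σ =>
    List.rec (fun _ => (A, B, false)) (fun c _ ih s => if c then (F (ih s) s).2 else (F (ih s) s).1) σ
  have N0 : ∀ s, N [] s = (A, B, false) := fun s => rfl
  have N1 : ∀ c σ s, N (c :: σ) s = if c then (F (N σ s) s).2 else (F (N σ s) s).1 :=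
    fun c σ s => rfl
  have hNe : ∀ c σ s t, InI t (N (c :: σ) s) → StepRel Bad Good s (N σ s) (F (N σ s) s) := by
    intro c σ s t h
    by_contra hcon
    have := hF2 (N σ s) s (fun hex => hcon (hF1 _ _ hex))
    rw [N1, this] at h
    simp only [InI, e0, ite_self] at h
    simp at h
    linarith
  have hpar : ∀ c σ s t, InI t (N (c :: σ) s) → InI t (N σ s) ∧ (N σ s).2.2 = false := by
    intro c σ s t h
    obtain ⟨h1, -⟩ := hNe c σ s t h
    refine ⟨?_, h1.1⟩
    obtain ⟨-, h2, h3, h4, h5, h6, h7, -⟩ := h1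
    rw [N1] at h
    have h3' : ((F (N σ s) s).1.1 : ℝ) = (N σ s).1 := by exact_mod_cast h3
    have h4' : ((F (N σ s) s).2.2.1 : ℝ) = (N σ s).2.1 := by exact_mod_cast h4
    have h6' : ((F (N σ s) s).1.2.1 : ℝ) ≤ (N σ s).2.1 := by exact_mod_cast h6
    have h7' : ((N σ s).1 : ℝ) ≤ (F (N σ s) s).2.1 := by exact_mod_cast h7
    cases c <;> simp [InI] at h ⊢ <;> constructor <;> linarith
  have hsib : ∀ σ s t, InI t (N (false :: σ) s) → InI t (N (true :: σ) s) →
      (N (false :: σ) s).2.2 = true ∧ (N (true :: σ) s).2.2 = true := by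
    intro σ s t h h'
    obtain ⟨h1, -⟩ := hNe _ σ s t h
    obtain ⟨-, -, -, -, -, -, -, -, -, -, -, h8⟩ := h1
    rw [N1] at h h' ⊢
    rw [N1]
    simp only [InI, if_true, Bool.false_eq_true, if_false] at h h' ⊢
    by_contra hcon
    have : (F (N σ s) s).1.2.2 = false ∨ (F (N σ s) s).2.2.2 = false := by
      revert hcon
      cases (F (N σ s) s).1.2.2 <;> cases (F (N σ s) s).2.2.2 <;> simp
    have h9 := h8 this
    have h9' : ((F (N σ s) s).1.2.1 : ℝ) ≤ (F (N σ s) s).2.1 := by exact_mod_cast h9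
    linarith
  have hsib' : ∀ c c' σ s t, InI t (N (c :: σ) s) → InI t (N (c' :: σ) s) →
      (N (c :: σ) s).2.2 = false → c = c' := by
    intro c c' σ s t h h' hb
    cases c <;> cases c' <;> try rfl
    · rw [(hsib σ s t h h').1] at hb; cases hb
    · rw [(hsib σ s t h' h).2] at hb; cases hb
  have hA : ∀ s t (σ τ : List Bool), σ.length = τ.length → InI t (N σ s) → InI t (N τ s) →
      (N σ s).2.2 = false → σ = τ := by
    intro s t σ
    induction σ with
    | nil => intro τ hl _ _ _; exact (List.length_eq_zero_iff.1 hl.symm).symm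
    | cons c σ ih =>
      intro τ hl h1 h2 h3
      cases τ with
      | nil => simp at hl
      | cons c' τ =>
        have e : σ = τ := ih τ (by simpa using hl) (hpar _ _ _ _ h1).1 (hpar _ _ _ _ h2).1
          (hpar _ _ _ _ h1).2
        subst e
        rw [hsib' c c' σ s t h1 h2 h3]
  have hdrop : ∀ s t k (τ : List Bool), InI t (N τ s) → k < τ.length →
      InI t (N (τ.drop (k+1)) s) ∧ (N (τ.drop (k+1)) s).2.2 = false := by
    intro s t k
    induction k with
    | zero =>
      intro τ h hk
      cases τ with
      | nil => simp at hk
      | cons c τ => simpa using hpar _ _ _ _ h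
    | succ k ih =>
      intro τ h hk
      cases τ with
      | nil => simp at hk
      | cons c τ => simpa using ih τ (hpar _ _ _ _ h).1 (by simpa using hk)
  have hlt : ∀ s t (σ τ : List Bool), InI t (N σ s) → InI t (N τ s) → (N σ s).2.2 = true →
      ¬ σ.length < τ.length := by
    intro s t σ τ h1 h2 h3 hl
    obtain ⟨k, hk⟩ := Nat.exists_eq_add_of_lt hl
    have := hdrop s t k τ h2 (by omega)
    have e := hA s t (τ.drop (k+1)) σ (by simp; omega) this.1 h1 this.2
    rw [e, h3] at this
    exact absurd this.2 (by simp)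
  refine ⟨N, ?_, ?_, ?_, ?_, fun s => rfl⟩
  · intro σ
    induction σ with
    | nil => intro d; simp only [N0]; exact MeasurableSet.const _
    | cons c σ ih =>
      intro d
      have : {s | N (c :: σ) s = d} = ⋃ d', ⋃ p : (ℚ × ℚ × Bool) × (ℚ × ℚ × Bool),
          ({s | N σ s = d'} ∩ {s | F d' s = p}) ∩ {s | (if c then p.2 else p.1) = d} := by
        ext s
        simp only [N1, mem_iUnion, mem_inter_iff, mem_ofPred_eq]
        constructor
        · intro h
          exact ⟨_, _, ⟨rfl, rfl⟩, h⟩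
        · rintro ⟨d', p, ⟨rfl, rfl⟩, h⟩
          exact h
      rw [this]
      exact MeasurableSet.iUnion fun d' => MeasurableSet.iUnion fun p =>
        ((ih d').inter (hF3 d' p)).inter (MeasurableSet.const _)
  · intro σ s t h hg
    cases σ with
    | nil => exact absurd ((congrArg (fun d => d.2.2) (N0 s)).symm.trans hg) (by simp)
    | cons c σ =>
      have := (hNe c σ s t h).2
      rw [N1] at hg ⊢
      cases c <;> simp at hg ⊢
      · exact this.1 hg
      · exact this.2.2.1 hg
  · intro s t hAt hBt
    by_cases hcon : ∃ σ, InI t (N σ s) ∧ (N σ s).2.2 = true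
    · exact Or.inl hcon
    right
    push Not at hcon
    have : ∀ k : ℕ, ∃ σ, InI t (N σ s) ∧ (N σ s).2.1 - (N σ s).1 ≤ (B - A) / 2 ^ k ∧
        Bad s (N σ s).1 (N σ s).2.1 := by
      intro k
      induction k with
      | zero => exact ⟨[], ⟨hAt, hBt⟩, by simp [N0], hroot s⟩
      | succ k ih =>
        obtain ⟨σ, h1, h2, h3⟩ := ih
        have hf : (N σ s).2.2 = false := by simpa using hcon σ h1
        have hlt' : (N σ s).1 < (N σ s).2.1 := by
          have := lt_of_le_of_lt h1.1 h1.2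
          exact_mod_cast this
        have hex := hF1 (N σ s) s (by
          have := hstep s _ _ hlt' h3
          rwa [← hf] at this)
        have hg0 := hcon (false :: σ)
        have hg1 := hcon (true :: σ)
        rw [N1] at hg0 hg1
        simp only [if_true, Bool.false_eq_true, if_false] at hg0 hg1
        have hN0 := N1 false σ s
        have hN1 := N1 true σ s
        simp only [if_true, Bool.false_eq_true, if_false] at hN0 hN1
        obtain ⟨⟨-, -, q3, q4, q5, q6, q7, -, -, q8, q9, q10⟩, -, r2, -, r4⟩ := hex
        have h3' : ((F (N σ s) s).1.1 : ℝ) = (N σ s).1 := by exact_mod_cast q3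
        have h4' : ((F (N σ s) s).2.2.1 : ℝ) = (N σ s).2.1 := by exact_mod_cast q4
        have h5' : ((F (N σ s) s).2.1 : ℝ) ≤ (F (N σ s) s).1.2.1 := by exact_mod_cast q5
        have hpow : (B - A) / 2 ^ (k+1) = ((B - A) / 2 ^ k) / 2 := by
          rw [pow_succ]; field_simp
        rcases lt_or_ge t ((F (N σ s) s).1.2.1 : ℝ) with ht | ht
        · have hin : InI t (F (N σ s) s).1 := ⟨by rw [h3']; exact h1.1, ht⟩
          have hb : (F (N σ s) s).1.2.2 = false := by simpa using hg0 hin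
          refine ⟨false :: σ, ?_⟩
          rw [hN0]
          refine ⟨hin, ?_, r2 hb⟩
          have := q8 hb
          rw [hpow]; linarith
        · have hin : InI t (F (N σ s) s).2 := ⟨by linarith, by rw [h4']; exact h1.2⟩
          have hb : (F (N σ s) s).2.2.2 = false := by simpa using hg1 hin
          refine ⟨true :: σ, ?_⟩
          rw [hN1]
          refine ⟨hin, ?_, r4 hb⟩
          have := q9 hb
          rw [hpow]; linarith
    intro k
    obtain ⟨σ, h1, h2, h3⟩ := this k
    exact ⟨_, _, h3, h1.1, h1.2, h2⟩
  · intro s t c σ τ h1 h2 h3 h4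
    have l1 := hlt s t (c :: σ) (c :: τ) h1 h2 h3
    have l2 := hlt s t (c :: τ) (c :: σ) h2 h1 h4
    simp only [List.length_cons] at l1 l2
    exact hA s t σ τ (by omega) (hpar _ _ _ _ h1).1 (hpar _ _ _ _ h2).1 (hpar _ _ _ _ h1).2

lemma exists_le_avg (g : ℝ → ℝ) (hg : Continuous g) {c d : ℝ} (h : c < d) :
    ∃ p ∈ Icc c d, g p * (d - c) ≤ ∫ x in c..d, g x := by
  obtain ⟨p, hp, hmin⟩ := isCompact_Icc.exists_isMinOn (nonempty_Icc.2 h.le) hg.continuousOn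
  refine ⟨p, hp, ?_⟩
  have := intervalIntegral.integral_mono_on (μ := volume) h.le (f := fun _ => g p) (g := g)
    intervalIntegrable_const (hg.intervalIntegrable _ _) (fun x hx => hmin hx)
  simpa [mul_comm] using this

lemma int_mono_sub (g : ℝ → ℝ) (hg : Continuous g) (h0 : ∀ x, 0 ≤ g x) {a b c d : ℝ}
    (h1 : a ≤ c) (h2 : c ≤ d) (h3 : d ≤ b) : ∫ x in c..d, g x ≤ ∫ x in a..b, g x :=
  intervalIntegral.integral_mono_interval h1 h2 h3 (ae_of_all _ h0) (hg.intervalIntegrable _ _)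

lemma deriv_diff_le (w1 w2 : ℝ → ℝ) (h1 : ∀ t, HasDerivAt w1 (w2 t) t) (c2 : Continuous w2)
    {a b x y : ℝ} (hx : x ∈ Icc a b) (hy : y ∈ Icc a b) :
    |w1 x - w1 y| ≤ ∫ t in a..b, |w2 t| := by
  wlog hxy : y ≤ x generalizing x y
  · rw [abs_sub_comm]
    exact this hy hx (le_of_not_ge hxy)
  rw [← intervalIntegral.integral_eq_sub_of_hasDerivAt (fun t _ => h1 t) (c2.intervalIntegrable _ _)]
  exact (intervalIntegral.abs_integral_le_integral_abs hxy).trans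
    (int_mono_sub _ c2.abs (fun _ => abs_nonneg _) hy.1 hxy hx.2)

lemma interp (w w1 w2 : ℝ → ℝ) (h0 : ∀ t, HasDerivAt w (w1 t) t)
    (h1 : ∀ t, HasDerivAt w1 (w2 t) t) (c2 : Continuous w2) {a b t : ℝ} (hab : a < b)
    (ht : t ∈ Icc a b) :
    |w1 t| * (b - a) ^ 2 ≤ 18 * (∫ x in a..b, |w x|) + (b - a) ^ 2 * ∫ x in a..b, |w2 x| := by
  have cw : Continuous w := continuous_iff_continuousAt.2 fun t => (h0 t).continuousAt
  set h := b - a with hh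
  have hpos : 0 < h := by linarith
  obtain ⟨p, hp, hp'⟩ := exists_le_avg (fun x => |w x|) cw.abs (c := a) (d := a + h/3) (by linarith)
  obtain ⟨q, hq, hq'⟩ := exists_le_avg (fun x => |w x|) cw.abs (c := b - h/3) (d := b) (by linarith)
  have m1 := int_mono_sub _ cw.abs (fun _ => abs_nonneg _) (a := a) (b := b) (c := a) (d := a + h/3)
    le_rfl (by linarith) (by linarith)
  have m2 := int_mono_sub _ cw.abs (fun _ => abs_nonneg _) (a := a) (b := b) (c := b - h/3) (d := b)
    (by linarith) (by linarith) le_rfl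
  set A0 := ∫ x in a..b, |w x|
  have hpq : p + h/3 ≤ q := by linarith [hp.2, hq.1]
  obtain ⟨ξ, hξ, hξ'⟩ := exists_hasDerivAt_eq_slope w w1 (show p < q by linarith) cw.continuousOn
    (fun x _ => h0 x)
  have hq0 : 0 < q - p := by linarith
  have e : w1 ξ * (q - p) = w q - w p := by rw [hξ']; field_simp
  have e1 : |w1 ξ| * (q - p) ≤ |w q| + |w p| := by
    rw [← abs_of_pos hq0, ← abs_mul, e]; exact abs_sub _ _
  have e2 : |w1 ξ| * (h/3) ≤ |w q| + |w p| :=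
    (mul_le_mul_of_nonneg_left (by linarith) (abs_nonneg _)).trans e1
  have e3 : |w1 ξ| * h^2 ≤ 18 * A0 := by
    have h5 : |w p| * (h/3) ≤ A0 := by
      have : a + h/3 - a = h/3 := by ring
      rw [this] at hp'; linarith
    have h6 : |w q| * (h/3) ≤ A0 := by
      have : b - (b - h/3) = h/3 := by ring
      rw [this] at hq'; linarith
    have := mul_le_mul_of_nonneg_right e2 (show 0 ≤ h/3 by linarith)
    nlinarith
  have e4 := deriv_diff_le w1 w2 h1 c2 (a := a) (b := b) ht (y := ξ)
    ⟨by linarith [hp.1, hξ.1], by linarith [hq.2, hξ.2]⟩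
  have e5 : |w1 t| ≤ |w1 ξ| + ∫ x in a..b, |w2 x| := by
    have := abs_sub_abs_le_abs_sub (w1 t) (w1 ξ)
    linarith
  have := mul_le_mul_of_nonneg_right e5 (sq_nonneg h)
  linarith

lemma root_bad (w w1 w2 : ℝ → ℝ) (h0 : ∀ t, HasDerivAt w (w1 t) t)
    (h1 : ∀ t, HasDerivAt w1 (w2 t) t) (c2 : Continuous w2) {a b : ℝ} (hab : a ≤ b)
    (hw : w a = 0) (hw1 : w1 a = 0) :
    ∫ x in a..b, |w x| ≤ (b - a) ^ 2 * ∫ x in a..b, |w2 x| := by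
  have cw : Continuous w := continuous_iff_continuousAt.2 fun t => (h0 t).continuousAt
  set M := ∫ x in a..b, |w2 x|
  have hb1 : ∀ t ∈ Icc a b, |w1 t| ≤ M := by
    intro t ht
    have := deriv_diff_le w1 w2 h1 c2 (a := a) (b := b) ht (y := a) ⟨le_rfl, hab⟩
    simpa [hw1] using this
  have hM : 0 ≤ M := (abs_nonneg _).trans (hb1 a ⟨le_rfl, hab⟩)
  have hb0 : ∀ t ∈ Icc a b, |w t| ≤ M * (b - a) := by
    intro t ht
    have := (convex_Icc a b).norm_image_sub_le_of_norm_hasDerivWithin_le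
      (f := w) (f' := w1) (C := M) (fun x _ => (h0 x).hasDerivWithinAt) (fun x hx => hb1 x hx)
      ⟨le_rfl, hab⟩ ht
    simp only [hw, sub_zero, Real.norm_eq_abs] at this
    refine this.trans (mul_le_mul_of_nonneg_left ?_ hM)
    rw [abs_of_nonneg (by linarith [ht.1])]; linarith [ht.2]
  have := intervalIntegral.integral_mono_on (μ := volume) hab (f := fun x => |w x|)
    (g := fun _ => M * (b - a))
    (cw.abs.intervalIntegrable _ _) intervalIntegrable_const hb0
  rw [intervalIntegral.integral_const, smul_eq_mul] at this
  linarith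

/-- rational intermediate value -/
lemma rat_ivt (p q : ℝ → ℝ) (hp : Continuous p) (hq : Continuous q) {m b : ℝ} (hmb : m < b)
    (h1 : p m < q m) (h2 : 2 * q b < p b) (hpos : ∀ c ∈ Icc m b, 0 < q c) :
    ∃ c : ℚ, m < c ∧ (c:ℝ) < b ∧ q c ≤ p c ∧ p c ≤ 2 * q c := by
  have hm := hpos m ⟨le_rfl, hmb.le⟩
  have hb := hpos b ⟨hmb.le, le_rfl⟩
  obtain ⟨c, hc, hc'⟩ := intermediate_value_Ioo hmb.le
    (f := fun x => p x - 3/2 * q x) (by fun_prop) (show (0:ℝ) ∈ Ioo _ _ from ⟨by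
      show p m - 3/2 * q m < 0; linarith, by show 0 < p b - 3/2 * q b; linarith⟩)
  have hc0 := hpos c ⟨hc.1.le, hc.2.le⟩
  simp only at hc'
  have hopen : IsOpen {x | m < x ∧ x < b ∧ q x < p x ∧ p x < 2 * q x} :=
    (isOpen_lt continuous_const continuous_id).inter ((isOpen_lt continuous_id continuous_const).inter
     ((isOpen_lt hq hp).inter (isOpen_lt hp (by fun_prop))))
  obtain ⟨x, hx, r, rfl⟩ := Rat.isDenseEmbedding_coe_real.dense.inter_open_nonempty _ hopen
    ⟨c, hc.1, hc.2, by linarith, by linarith⟩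
  exact ⟨r, hx.1, hx.2.1, hx.2.2.1.le, hx.2.2.2.le⟩

def BadI (f g : ℝ → ℝ) (a b : ℚ) : Prop :=
  ∫ x in (a:ℝ)..b, g x ≤ ((b:ℝ) - a) ^ 2 * ∫ x in (a:ℝ)..b, f x

def GoodI (f g : ℝ → ℝ) (a b : ℚ) : Prop :=
  BadI f g a b ∧ ((b:ℝ) - a) ^ 2 * ∫ x in (a:ℝ)..b, f x ≤ 2 * ∫ x in (a:ℝ)..b, g x

lemma cont_right (f : ℝ → ℝ) (hf : Continuous f) (a : ℝ) : Continuous fun c => ∫ x in a..c, f x :=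
  intervalIntegral.continuous_primitive (fun _ _ => hf.intervalIntegrable _ _) a

lemma cont_left (f : ℝ → ℝ) (hf : Continuous f) (b : ℝ) : Continuous fun c => ∫ x in c..b, f x := by
  simp_rw [intervalIntegral.integral_symm b]
  exact (cont_right f hf b).neg

lemma grow_right (f g : ℝ → ℝ) (hf : Continuous f) (hg : Continuous g) (f0 : ∀ x, 0 ≤ f x)
    (g0 : ∀ x, 0 ≤ g x) (a m b : ℚ) (ham : a < m) (hmb : m < b) (h1 : ¬ BadI f g a m)
    (h2 : 2 * ∫ x in (a:ℝ)..b, g x < ((b:ℝ) - a) ^ 2 * ∫ x in (a:ℝ)..b, f x) :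
    ∃ c : ℚ, m < c ∧ c < b ∧ GoodI f g a c := by
  have ham' : (a:ℝ) < m := by exact_mod_cast ham
  have hmb' : (m:ℝ) < b := by exact_mod_cast hmb
  unfold BadI at h1
  push Not at h1
  have hfm : 0 ≤ ∫ x in (a:ℝ)..m, f x := intervalIntegral.integral_nonneg ham'.le (fun x _ => f0 x)
  obtain ⟨c, h3, h4, h5, h6⟩ := rat_ivt (fun c => (c - a) ^ 2 * ∫ x in (a:ℝ)..c, f x)
    (fun c => ∫ x in (a:ℝ)..c, g x)
    (((continuous_id.sub continuous_const).pow 2).mul (cont_right f hf a)) (cont_right g hg a)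
    hmb' h1 h2 (fun c hc => by
      refine lt_of_lt_of_le (lt_of_le_of_lt (by positivity) h1) ?_
      exact int_mono_sub g hg g0 le_rfl ham'.le hc.1)
  exact ⟨c, by exact_mod_cast h3, by exact_mod_cast h4, h5, h6⟩

lemma grow_left (f g : ℝ → ℝ) (hf : Continuous f) (hg : Continuous g) (f0 : ∀ x, 0 ≤ f x)
    (g0 : ∀ x, 0 ≤ g x) (a m b : ℚ) (ham : a < m) (hmb : m < b) (h1 : ¬ BadI f g m b)
    (h2 : 2 * ∫ x in (a:ℝ)..b, g x < ((b:ℝ) - a) ^ 2 * ∫ x in (a:ℝ)..b, f x) :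
    ∃ c : ℚ, a < c ∧ c < m ∧ GoodI f g c b := by
  have ham' : (a:ℝ) < m := by exact_mod_cast ham
  have hmb' : (m:ℝ) < b := by exact_mod_cast hmb
  unfold BadI at h1
  push Not at h1
  have hfm : 0 ≤ ∫ x in (m:ℝ)..b, f x := intervalIntegral.integral_nonneg hmb'.le (fun x _ => f0 x)
  obtain ⟨c, h3, h4, h5, h6⟩ := rat_ivt (fun c => (b - (-c)) ^ 2 * ∫ x in (-c)..(b:ℝ), f x)
    (fun c => ∫ x in (-c)..(b:ℝ), g x)
    (((continuous_const.sub continuous_neg).pow 2).mul ((cont_left f hf b).comp continuous_neg))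
    ((cont_left g hg b).comp continuous_neg)
    (neg_lt_neg ham') (by simpa using h1) (by simpa using h2) (fun c hc => by
      refine lt_of_lt_of_le (lt_of_le_of_lt (by positivity) h1) ?_
      exact int_mono_sub g hg g0 (by linarith [hc.1]) hmb'.le le_rfl)
  refine ⟨-c, ?_, ?_, ?_, ?_⟩
  · have : (a:ℝ) < -c := by linarith
    exact_mod_cast this
  · have : -c < (m:ℝ) := by linarith
    exact_mod_cast this
  · simpa [BadI] using h5
  · simpa using h6

lemma step_exists {α : Type*} (f g : α → ℝ → ℝ) (s : α) (hf : Continuous (f s))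
    (hg : Continuous (g s)) (f0 : ∀ x, 0 ≤ f s x)
    (g0 : ∀ x, 0 ≤ g s x) (a b : ℚ) (hab : a < b) (hbad : BadI (f s) (g s) a b) :
    ∃ p, StepRel (fun s => BadI (f s) (g s)) (fun s => GoodI (f s) (g s)) s (a, b, false) p := by
  unfold StepRel
  by_cases hgood : GoodI (f s) (g s) a b
  · exact ⟨((a, b, true), (a, b, true)), by simp [hab, hab.le, hgood]⟩
  have h2 : 2 * ∫ x in (a:ℝ)..b, g s x < ((b:ℝ) - a) ^ 2 * ∫ x in (a:ℝ)..b, f s x := by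
    by_contra h
    exact hgood ⟨hbad, not_lt.1 h⟩
  obtain ⟨m, hm⟩ : ∃ m, m = (a + b) / 2 := ⟨_, rfl⟩
  have ham : a < m := by linarith
  have hmb : m < b := by linarith
  by_cases hl : BadI (f s) (g s) a m
  · by_cases hr : BadI (f s) (g s) m b
    · refine ⟨((a, m, false), (m, b, false)), ?_⟩
      simp only [hl, hr, ham, hmb, ham.le, hmb.le, hab, le_refl, true_and]
      simp
      constructor <;> linarith
    · obtain ⟨c, h3, h4, h5⟩ := grow_left _ _ hf hg f0 g0 a m b ham hmb hr h2
      by_cases hx : BadI (f s) (g s) a c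
      · refine ⟨((a, c, false), (c, b, true)), ?_⟩
        simp [hx, h5, h3, hab, h3.le]
        refine ⟨?_, ?_, ?_⟩ <;> linarith
      · obtain ⟨d, h6, h7, h8⟩ := grow_right _ _ hf hg f0 g0 a c b h3 (by linarith) hx h2
        refine ⟨((a, d, true), (c, b, true)), ?_⟩
        simp [h8, h5, hab]
        refine ⟨?_, ?_, ?_, ?_, ?_⟩ <;> linarith
  · obtain ⟨c, h3, h4, h5⟩ := grow_right _ _ hf hg f0 g0 a m b ham hmb hl h2
    by_cases hx : BadI (f s) (g s) c b
    · refine ⟨((a, c, true), (c, b, false)), ?_⟩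
      simp [hx, h5, h4, hab, h4.le]
      refine ⟨?_, ?_, ?_⟩ <;> linarith
    · obtain ⟨d, h6, h7, h8⟩ := grow_left _ _ hf hg f0 g0 a c b (by linarith) h4 hx h2
      refine ⟨((a, c, true), (d, b, true)), ?_⟩
      simp [h8, h5, hab]
      refine ⟨?_, ?_, ?_, ?_, ?_⟩ <;> linarith

/-- shrinking bad intervals force the derivative to vanish -/
lemma bad_shrink (w w1 w2 : ℝ → ℝ) (h0 : ∀ t, HasDerivAt w (w1 t) t)
    (h1 : ∀ t, HasDerivAt w1 (w2 t) t) (c2 : Continuous w2) (A B : ℚ) (t : ℝ)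
    (h : ∀ k : ℕ, ∃ a b : ℚ, BadI (fun x => |w2 x|) (fun x => |w x|) a b ∧ (a : ℝ) ≤ t ∧ t < b ∧
      b - a ≤ (B - A) / 2 ^ k) : w1 t = 0 := by
  by_contra hne
  have hpos : 0 < |w1 t| := abs_pos.2 hne
  obtain ⟨M, hM⟩ := (isCompact_Icc (a := t - 1) (b := t + 1)).exists_bound_of_continuousOn c2.continuousOn
  have hM0 : 0 ≤ M := (norm_nonneg _).trans (hM t ⟨by linarith, by linarith⟩)
  have htend : Filter.Tendsto (fun k : ℕ => ((B:ℝ) - A) / 2 ^ k) Filter.atTop (nhds 0) := by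
    have := (tendsto_pow_atTop_nhds_zero_of_lt_one (r := (1/2:ℝ)) (by norm_num) (by norm_num)).const_mul ((B:ℝ) - A)
    simpa [div_eq_mul_inv] using this
  obtain ⟨k, hk⟩ := (htend.eventually (gt_mem_nhds (show 0 < min 1 (|w1 t| / (19 * M + 1)) by positivity))).exists
  obtain ⟨a, b, hb, hat, htb, hle⟩ := h k
  have hle' : (b:ℝ) - a ≤ (B - A) / 2 ^ k := by exact_mod_cast hle
  have hh := lt_of_le_of_lt hle' hk
  have hh1 := lt_of_lt_of_le hh (min_le_left _ _)
  have hh2 := lt_of_lt_of_le hh (min_le_right _ _)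
  have hab : (a:ℝ) < b := by linarith
  have hi := interp w w1 w2 h0 h1 c2 hab ⟨hat, htb.le⟩
  unfold BadI at hb
  have hint : ∫ x in (a:ℝ)..b, |w2 x| ≤ M * (b - a) := by
    have := intervalIntegral.integral_mono_on (μ := volume) hab.le (f := fun x => |w2 x|)
      (g := fun _ => M) (c2.abs.intervalIntegrable _ _) intervalIntegrable_const
      (fun x hx => hM x ⟨by linarith [hx.1], by linarith [hx.2]⟩)
    rw [intervalIntegral.integral_const, smul_eq_mul] at this
    linarith
  have hsq : 0 < ((b:ℝ) - a) ^ 2 := by have : 0 < (b:ℝ) - a := by linarith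
                                       positivity
  have h3 : |w1 t| * ((b:ℝ) - a) ^ 2 ≤ (19 * M * (b - a)) * ((b:ℝ) - a) ^ 2 := by nlinarith
  have h4 := le_of_mul_le_mul_right h3 hsq
  rw [lt_div_iff₀ (by positivity)] at hh2
  nlinarith

lemma overlap_le {X κ : Type*} (P : κ → Set X) (col : κ → Bool) (x : X)
    (h : InjOn col {k | x ∈ P k}) :
    ∑' m, (P m).indicator (fun _ => (1 : ℝ≥0∞)) x ≤ 5 := by
  have e : ∀ m, (P m).indicator (fun _ => (1 : ℝ≥0∞)) x =
      ({k | x ∈ P k} : Set κ).indicator (fun _ => (1 : ℝ≥0∞)) m := by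
    intro m
    by_cases hm : x ∈ P m <;> simp [indicator, hm]
  simp_rw [e]
  rw [← tsum_subtype, ENNReal.tsum_set_one]
  have h1 : ({k | x ∈ P k} : Set κ).encard ≤ 2 := by
    rw [← h.encard_image]
    refine (encard_le_encard (subset_univ _)).trans ?_
    rw [encard_univ]; simp
  calc ((({k | x ∈ P k} : Set κ).encard : ℕ∞) : ℝ≥0∞) ≤ ((2 : ℕ∞) : ℝ≥0∞) := by exact_mod_cast h1
    _ ≤ 5 := by norm_num

/-- Passing from an estimate outside null pieces to an estimate everywhere. -/
lemma fix_null {n : ℕ} {κ : Type} [Encodable κ] (h f g : (Fin n → ℝ) → ℝ) (hh : Continuous h)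
    (f0 : ∀ x, 0 ≤ f x) (g0 : ∀ x, 0 ≤ g x)
    (Q : κ → Set (Fin n → ℝ)) (col : κ → Bool) (hQ : ∀ k, MeasurableSet (Q k))
    (hfin : ∀ k, volume (Q k) < ⊤)
    (hcov : ∀ x, h x ≠ 0 → ∃ k, x ∈ Q k ∧ (0 < volume (Q k) →
      |h x| ^ 2 ≤ 1600 * ((⨍ t in Q k, f t) * (⨍ t in Q k, g t))))
    (hcol : ∀ x, InjOn col {k | x ∈ Q k}) :
    ∃ (ι : Type) (_ : Countable ι) (P : ι → Set (Fin n → ℝ)),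
      (∀ m, MeasurableSet (P m) ∧ 0 < volume (P m) ∧ volume (P m) < ⊤) ∧
      (∀ x, ENNReal.ofReal (|h x| ^ 2) ≤
        ENNReal.ofReal 6400 *
          ∑' m, (ENNReal.ofReal (⨍ t in P m, f t)
              * ENNReal.ofReal (⨍ t in P m, g t))
            * (P m).indicator (fun _ => (1 : ℝ≥0∞)) x) ∧
      (∀ x, ∑' m, (P m).indicator (fun _ => (1 : ℝ≥0∞)) x ≤ 5) := by
  classical
  have hct : Countable κ := Encodable.countable
  let Z : Set (Fin n → ℝ) := ⋃ k : {k : κ // volume (Q k) = 0}, Q k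
  have hZm : MeasurableSet Z := MeasurableSet.iUnion fun k => hQ k
  have hZ0 : volume Z = 0 := measure_iUnion_null fun k => k.2
  let a : κ → ℝ := fun k => (⨍ t in Q k, f t) * (⨍ t in Q k, g t)
  let W : κ → Set (Fin n → ℝ) := fun k => {x | x ∈ Z ∧ |h x| ^ 2 ≤ 6400 * a k ∧
    ∀ k', (0 < volume (Q k') ∧ |h x| ^ 2 ≤ 6400 * a k') → Encodable.encode k ≤ Encodable.encode k'}
  have hlev : ∀ c : ℝ, MeasurableSet {x | |h x| ^ 2 ≤ c} := fun c =>
    (isClosed_le (by fun_prop) continuous_const).measurableSet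
  have hWm : ∀ k, MeasurableSet (W k) := by
    intro k
    refine hZm.inter ((hlev _).inter (measAll _ fun k' => ?_))
    by_cases hk : Encodable.encode k ≤ Encodable.encode k'
    · simp [hk]
    · simp only [hk, imp_false]
      exact ((MeasurableSet.const _).inter (hlev _)).compl
  have hWZ : ∀ k, W k ⊆ Z := fun k x hx => hx.1
  let ι := {k : κ // 0 < volume (Q k)}
  let P : ι → Set (Fin n → ℝ) := fun k => (Q k \ Z) ∪ W k
  have hae : ∀ k : ι, P k =ᵐ[volume] Q k := by
    intro k
    have hZae : ∀ᵐ x, x ∉ Z := measure_eq_zero_iff_ae_notMem.1 hZ0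
    filter_upwards [hZae] with x hx
    have : x ∈ P k ↔ x ∈ Q k := by
      simp only [P, mem_union, mem_sdiff]
      constructor
      · rintro (h1 | h1)
        · exact h1.1
        · exact absurd (hWZ _ h1) hx
      · intro h1; exact Or.inl ⟨h1, hx⟩
    exact propext this
  have havg : ∀ (k : ι) (φ : (Fin n → ℝ) → ℝ), ⨍ t in P k, φ t = ⨍ t in Q k, φ t := by
    intro k φ
    rw [Measure.restrict_congr_set (hae k)]
  have hterm : ∀ x, h x ≠ 0 → ∃ k : ι, x ∈ P k ∧ |h x| ^ 2 ≤ 6400 * a k := by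
    intro x hx
    have ha0 : ∀ k, 0 ≤ a k := fun k => mul_nonneg
      (by rw [setAverage_eq]; exact smul_nonneg (by positivity) (integral_nonneg f0))
      (by rw [setAverage_eq]; exact smul_nonneg (by positivity) (integral_nonneg g0))
    by_cases hxZ : x ∈ Z
    · have hex : ∃ k', 0 < volume (Q k') ∧ |h x| ^ 2 ≤ 6400 * a k' := by
        have hpos : 0 < |h x| := abs_pos.2 hx
        have hop : IsOpen {y | |h x| / 2 < |h y|} := isOpen_lt continuous_const (by fun_prop)
        have hvol : 0 < volume {y | |h x| / 2 < |h y|} :=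
          hop.measure_pos volume ⟨x, by show |h x| / 2 < |h x|; linarith⟩
        obtain ⟨y, hy, hyZ⟩ : ∃ y ∈ {y | |h x| / 2 < |h y|}, y ∉ Z := by
          by_contra hcon
          push Not at hcon
          have := measure_mono_null (μ := volume) (show {y | |h x| / 2 < |h y|} ⊆ Z from hcon) hZ0
          rw [this] at hvol
          exact lt_irrefl _ hvol
        have hy' : |h x| / 2 < |h y| := hy
        have hy0 : h y ≠ 0 := abs_pos.1 (by linarith)
        obtain ⟨k, hk, hk'⟩ := hcov y hy0
        have hkpos : 0 < volume (Q k) := by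
          rw [pos_iff_ne_zero]
          intro h0
          exact hyZ (mem_iUnion.2 ⟨⟨k, h0⟩, hk⟩)
        refine ⟨k, hkpos, ?_⟩
        have := hk' hkpos
        have h3 : (|h x| / 2) ^ 2 ≤ |h y| ^ 2 := by gcongr
        simp only [a]
        linarith
      obtain ⟨k, hk, hmin⟩ := (measure (fun e : κ => Encodable.encode e)).wf.has_min
        {k' | 0 < volume (Q k') ∧ |h x| ^ 2 ≤ 6400 * a k'} hex
      exact ⟨⟨k, hk.1⟩, Or.inr ⟨hxZ, hk.2, fun k' hk' => not_lt.1 (hmin k' hk')⟩, hk.2⟩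
    · obtain ⟨k, hk, hk'⟩ := hcov x hx
      have hkpos : 0 < volume (Q k) := by
        rw [pos_iff_ne_zero]
        intro h0
        exact hxZ (mem_iUnion.2 ⟨⟨k, h0⟩, hk⟩)
      refine ⟨⟨k, hkpos⟩, Or.inl ⟨hk, hxZ⟩, ?_⟩
      have h1 := hk' hkpos
      have h2 := ha0 k
      simp only [a] at h2 ⊢
      linarith
  refine ⟨ι, inferInstance, P, ?_, ?_, ?_⟩
  · intro k
    refine ⟨((hQ k).diff hZm).union (hWm k), ?_, ?_⟩
    · rw [measure_congr (hae k)]; exact k.2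
    · rw [measure_congr (hae k)]; exact hfin k
  · intro x
    by_cases hx : h x = 0
    · simp [hx]
    obtain ⟨k, hk, hk'⟩ := hterm x hx
    refine le_trans ?_ (mul_le_mul_right (ENNReal.le_tsum k) _)
    rw [indicator_of_mem hk, mul_one, havg, havg, ← ENNReal.ofReal_mul
      (by rw [setAverage_eq]; exact smul_nonneg (by positivity) (integral_nonneg f0)),
      ← ENNReal.ofReal_mul (by norm_num)]
    exact ENNReal.ofReal_le_ofReal hk'
  · intro x
    refine overlap_le P (fun k => col k) x ?_
    intro k hk k' hk' hc
    rcases hk with hk | hk <;> rcases hk' with hk' | hk'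
    · exact Subtype.ext (hcol x hk.1 hk'.1 hc)
    · exact absurd (hWZ _ hk') hk.2
    · exact absurd (hWZ _ hk) hk'.2
    · exact Subtype.ext (Encodable.encode_injective (le_antisymm
        (hk.2.2 _ ⟨k'.2, hk'.2.1⟩) (hk'.2.2 _ ⟨k.2, hk.2.1⟩)))

lemma line_deriv {m : ℕ} (i : Fin (m+1)) (v : (Fin (m+1) → ℝ) → ℝ) (hv : Differentiable ℝ v)
    (s : Fin m → ℝ) (t : ℝ) :
    HasDerivAt (fun t => v (i.insertNth t s)) (fderiv ℝ v (i.insertNth t s) (Pi.single i 1)) t := by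
  have h1 : (fun t : ℝ => (i.insertNth t s : Fin (m+1) → ℝ)) =
      Function.update (i.insertNth (0:ℝ) s : Fin (m+1) → ℝ) i := by
    funext t; rw [Fin.update_insertNth]
  have h2 : HasDerivAt (fun t : ℝ => (i.insertNth t s : Fin (m+1) → ℝ)) (Pi.single i 1) t := by
    rw [h1]; exact hasDerivAt_update _ i t
  exact (hv _).hasFDerivAt.comp_hasDerivAt t h2

lemma avg_lower {m : ℕ} (i : Fin (m+1)) (φ : (Fin (m+1) → ℝ) → ℝ) (hφ : Integrable φ)
    (a b c : ℝ) (hab : a < b) (S : Set (Fin m → ℝ)) (hS : MeasurableSet S) (hSf : volume S < ⊤)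
    (hlow : ∀ s ∈ S, c * (b - a) ≤ ∫ t in a..b, φ (i.insertNth t s))
    (Q : Set (Fin (m+1) → ℝ))
    (hQ : Q = (MeasurableEquiv.piFinSuccAbove (fun _ => ℝ) i) ⁻¹' (Ico a b ×ˢ S))
    (hpos : 0 < volume Q) : c ≤ ⨍ x in Q, φ x := by
  have mp := volume_preserving_piFinSuccAbove (fun _ : Fin (m+1) => ℝ) i
  set e := MeasurableEquiv.piFinSuccAbove (fun _ : Fin (m+1) => ℝ) i with he
  have hvol : volume Q = volume (Ico a b) * volume S := by
    rw [hQ, mp.measure_preimage (measurableSet_Ico.prod hS).nullMeasurableSet]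
    exact Measure.prod_prod _ _
  have hreal : volume.real Q = (b - a) * volume.real S := by
    rw [measureReal_def, hvol, ENNReal.toReal_mul, Real.volume_Ico,
      ENNReal.toReal_ofReal (by linarith)]; rfl
  have hpr : 0 < volume.real Q := by
    rw [measureReal_def]
    refine ENNReal.toReal_pos hpos.ne' ?_
    rw [hvol, Real.volume_Ico]
    exact ENNReal.mul_ne_top ENNReal.ofReal_ne_top hSf.ne
  have hint2 : Integrable (fun y => φ (e.symm y)) (volume : Measure (ℝ × (Fin m → ℝ))) :=
    (mp.symm e).integrable_comp_of_integrable hφ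
  have h1 : ∫ x in Q, φ x = ∫ y in Ico a b ×ˢ S, φ (e.symm y) := by
    rw [hQ, ← mp.setIntegral_preimage_emb e.measurableEmbedding]
    simp
  have hint3 : Integrable (fun y => φ (e.symm y))
      (((volume : Measure ℝ).restrict (Ico a b)).prod ((volume : Measure (Fin m → ℝ)).restrict S)) := by
    rw [Measure.prod_restrict]
    exact hint2.integrableOn
  have h2 : ∫ y in Ico a b ×ˢ S, φ (e.symm y) = ∫ s in S, ∫ t in Ico a b, φ (e.symm (t, s)) := by
    rw [Measure.volume_eq_prod, ← Measure.prod_restrict, integral_prod_symm _ hint3]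
  have h3 : ∫ s in S, c * (b - a) ≤ ∫ s in S, ∫ t in Ico a b, φ (e.symm (t, s)) := by
    refine setIntegral_mono_on (integrableOn_const hSf.ne) hint3.integral_prod_right hS ?_
    intro s hs
    refine (hlow s hs).trans (le_of_eq ?_)
    rw [intervalIntegral.integral_of_le hab.le, integral_Ico_eq_integral_Ioc]
    rfl
  rw [setAverage_eq, smul_eq_mul, ← div_eq_inv_mul, le_div_iff₀ hpr, h1, h2, hreal]
  refine le_trans (le_of_eq ?_) h3
  rw [setIntegral_const, smul_eq_mul]; ring

theorem sparse_pointwise_estimate (n : ℕ) :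
    ∃ C : ℝ, 0 < C ∧
      ∀ (u : (Fin n → ℝ) → ℝ), ContDiff ℝ 2 u → HasCompactSupport u →
        ∀ i : Fin n,
          ∃ (ι : Type) (_ : Countable ι) (P : ι → Set (Fin n → ℝ)),
            (∀ m, MeasurableSet (P m) ∧ 0 < volume (P m) ∧ volume (P m) < ⊤) ∧
            (∀ x, ENNReal.ofReal (|pderivIter n i 1 u x| ^ 2) ≤
              ENNReal.ofReal C *
                ∑' m, (ENNReal.ofReal (⨍ t in P m, |pderivIter n i 2 u t|)
                    * ENNReal.ofReal (⨍ t in P m, |u t|))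
                  * (P m).indicator (fun _ => (1 : ℝ≥0∞)) x) ∧
            (∀ x, ∑' m, (P m).indicator (fun _ => (1 : ℝ≥0∞)) x ≤ 5) := by
  refine ⟨6400, by norm_num, ?_⟩
  intro u hu hsupp i
  obtain ⟨m, rfl⟩ : ∃ m, n = m + 1 := ⟨n - 1, by have := i.pos; omega⟩
  set u1 := pderivIter (m+1) i 1 u with hu1
  set u2 := pderivIter (m+1) i 2 u with hu2
  have e1 : u1 = fun x => fderiv ℝ u x (Pi.single i 1) := rfl
  have e2 : u2 = fun x => fderiv ℝ u1 x (Pi.single i 1) := rfl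
  have d0 : Differentiable ℝ u := hu.differentiable (by norm_num)
  have cd1 : ContDiff ℝ 1 u1 := by
    rw [e1]; exact (hu.fderiv_right (m := 1) (by norm_num)).clm_apply contDiff_const
  have d1 : Differentiable ℝ u1 := cd1.differentiable (by norm_num)
  have c1 : Continuous u1 := cd1.continuous
  have c2 : Continuous u2 := by
    rw [e2]; exact (cd1.continuous_fderiv (by norm_num)).clm_apply continuous_const
  have c0 : Continuous u := hu.continuous
  have s1 : tsupport u1 ⊆ tsupport u := by
    rw [e1]; exact tsupport_fderiv_apply_subset ℝ _
  have hs1 : HasCompactSupport u1 := hsupp.mono' (subset_closure.trans s1)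
  have s2 : tsupport u2 ⊆ tsupport u1 := by
    rw [e2]; exact tsupport_fderiv_apply_subset ℝ _
  have hs2 : HasCompactSupport u2 := hs1.mono' (subset_closure.trans s2)
  have i0 : Integrable (fun x => |u x|) := (c0.integrable_of_hasCompactSupport hsupp).abs
  have i2 : Integrable (fun x => |u2 x|) := (c2.integrable_of_hasCompactSupport hs2).abs
  obtain ⟨R, hR⟩ : ∃ R : ℕ, ∀ x ∈ tsupport u, ‖x‖ ≤ R := by
    obtain ⟨r, hr⟩ := hsupp.isCompact.isBounded.exists_norm_le
    obtain ⟨R, hR⟩ := exists_nat_ge r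
    exact ⟨R, fun x hx => (hr x hx).trans hR⟩
  have hins : Continuous fun p : (Fin m → ℝ) × ℝ => (i.insertNth p.2 p.1 : Fin (m+1) → ℝ) :=
    Continuous.finInsertNth i continuous_snd continuous_fst
  have hins' : ∀ s : Fin m → ℝ, Continuous fun t : ℝ => (i.insertNth t s : Fin (m+1) → ℝ) :=
    fun s => hins.comp (by fun_prop : Continuous fun t : ℝ => (s, t))
  let w : (Fin m → ℝ) → ℝ → ℝ := fun s t => u (i.insertNth t s)
  let w1 : (Fin m → ℝ) → ℝ → ℝ := fun s t => u1 (i.insertNth t s)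
  let w2 : (Fin m → ℝ) → ℝ → ℝ := fun s t => u2 (i.insertNth t s)
  have hw0 : ∀ s t, HasDerivAt (w s) (w1 s t) t := fun s t => line_deriv i u d0 s t
  have hw1 : ∀ s t, HasDerivAt (w1 s) (w2 s t) t := fun s t => line_deriv i u1 d1 s t
  have cw : ∀ s, Continuous (w s) := fun s => c0.comp (hins' s)
  have cw2 : ∀ s, Continuous (w2 s) := fun s => c2.comp (hins' s)
  have mA0 : ∀ a b : ℝ, Measurable fun s => ∫ t in a..b, |w s t| := fun a b =>
    (intervalIntegral.continuous_parametric_intervalIntegral_of_continuous'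
      (f := fun s t => |w s t|) (c0.comp hins).abs a b).measurable
  have mA2 : ∀ a b : ℝ, Measurable fun s => ∫ t in a..b, |w2 s t| := fun a b =>
    (intervalIntegral.continuous_parametric_intervalIntegral_of_continuous'
      (f := fun s t => |w2 s t|) (c2.comp hins).abs a b).measurable
  let f : (Fin m → ℝ) → ℝ → ℝ := fun s t => |w2 s t|
  let g : (Fin m → ℝ) → ℝ → ℝ := fun s t => |w s t|
  have hB : ∀ a b, MeasurableSet {s | BadI (f s) (g s) a b} := fun a b =>
    measurableSet_le (mA0 a b) ((mA2 a b).const_mul _)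
  have hG : ∀ a b, MeasurableSet {s | GoodI (f s) (g s) a b} := fun a b =>
    (hB a b).inter (measurableSet_le ((mA2 a b).const_mul _) ((mA0 a b).const_mul _))
  let B : ℚ := R + 1
  let A : ℚ := -B
  have hBr : (B : ℝ) = R + 1 := by simp [B]
  have hAr : (A : ℝ) = -(R + 1) := by simp [A, B]
  have hout : ∀ s, (i.insertNth (A:ℝ) s : Fin (m+1) → ℝ) ∉ tsupport u := by
    intro s hmem
    have h1 := (norm_le_pi_norm _ i).trans (hR _ hmem)
    rw [Fin.insertNth_apply_same, Real.norm_eq_abs, hAr, abs_neg,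
      abs_of_nonneg (by positivity)] at h1
    linarith
  have hAB : (A:ℝ) ≤ B := by rw [hAr, hBr]; have : (0:ℝ) ≤ R := by positivity
                             linarith
  have hroot : ∀ s, BadI (f s) (g s) A B := fun s =>
    root_bad (w s) (w1 s) (w2 s) (hw0 s) (hw1 s) (cw2 s) hAB
      (image_eq_zero_of_notMem_tsupport (f := u) (hout s))
      (image_eq_zero_of_notMem_tsupport (f := u1) fun h => hout s (s1 h))
  obtain ⟨N, N1, N2, N3, N4, N5⟩ := tree_exists (fun s => BadI (f s) (g s))
    (fun s => GoodI (f s) (g s)) hB hG A B hroot (fun s a b hab hbad =>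
      step_exists f g s (cw2 s).abs (cw s).abs (fun _ => abs_nonneg _) (fun _ => abs_nonneg _)
        a b hab hbad)
  let κ := List Bool × (ℚ × ℚ) × ℤ
  let S : κ → Set (Fin m → ℝ) := fun k =>
    {s | N k.1 s = (k.2.1.1, k.2.1.2, true)} ∩ (Metric.closedBall 0 R ∩
      {s | (2:ℝ) ^ k.2.2 * ((k.2.1.2 : ℝ) - k.2.1.1) ≤ ∫ t in (k.2.1.1 : ℝ)..k.2.1.2, |w s t| ∧
        ∫ t in (k.2.1.1 : ℝ)..k.2.1.2, |w s t| < (2:ℝ) ^ (k.2.2 + 1) * ((k.2.1.2 : ℝ) - k.2.1.1)})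
  have hSm : ∀ k, MeasurableSet (S k) := fun k =>
    (N1 _ _).inter (Metric.isClosed_closedBall.measurableSet.inter
      ((measurableSet_le measurable_const (mA0 _ _)).inter
        (measurableSet_lt (mA0 _ _) measurable_const)))
  have hSf : ∀ k, volume (S k) < ⊤ := fun k =>
    lt_of_le_of_lt (measure_mono (inter_subset_right.trans inter_subset_left))
      measure_closedBall_lt_top
  let e := MeasurableEquiv.piFinSuccAbove (fun _ : Fin (m+1) => ℝ) i
  have mp := volume_preserving_piFinSuccAbove (fun _ : Fin (m+1) => ℝ) i
  let Q : κ → Set (Fin (m+1) → ℝ) := fun k => e ⁻¹' (Ico (k.2.1.1:ℝ) (k.2.1.2:ℝ) ×ˢ S k)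
  have hQm : ∀ k, MeasurableSet (Q k) := fun k => e.measurable (measurableSet_Ico.prod (hSm k))
  have hQf : ∀ k, volume (Q k) < ⊤ := by
    intro k
    have : volume (Q k) = volume (Ico (k.2.1.1:ℝ) (k.2.1.2:ℝ)) * volume (S k) := by
      rw [mp.measure_preimage (measurableSet_Ico.prod (hSm k)).nullMeasurableSet]
      exact Measure.prod_prod _ _
    rw [this, Real.volume_Ico]
    exact ENNReal.mul_lt_top ENNReal.ofReal_lt_top (hSf k)
  have hmemQ : ∀ x k, x ∈ Q k ↔ ((k.2.1.1:ℝ) ≤ x i ∧ x i < (k.2.1.2:ℝ)) ∧ i.removeNth x ∈ S k :=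
    fun x k => Iff.rfl
  have hxs : ∀ x : Fin (m+1) → ℝ, i.insertNth (x i) (i.removeNth x) = x :=
    fun x => Fin.insertNth_self_removeNth i x
  refine fix_null u1 (fun x => |u2 x|) (fun x => |u x|) c1 (fun _ => abs_nonneg _)
    (fun _ => abs_nonneg _) Q (fun k => k.1.headD true) hQm hQf ?_ ?_
  · intro x hx
    have hxsup : x ∈ tsupport u := s1 (subset_tsupport _ hx)
    have hxR := hR x hxsup
    obtain ⟨s, hs⟩ : ∃ s, s = i.removeNth x := ⟨_, rfl⟩
    have hxi : |x i| ≤ R := (norm_le_pi_norm x i).trans hxR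
    rw [abs_le] at hxi
    have hw1x : w1 s (x i) = u1 x := by simp only [w1, hs, hxs]
    rcases N3 s (x i) (by rw [hAr]; linarith) (by rw [hBr]; linarith) with h | h
    swap
    · exact absurd (hw1x.symm.trans
        (bad_shrink (w s) (w1 s) (w2 s) (hw0 s) (hw1 s) (cw2 s) A B (x i) h)) hx
    obtain ⟨σ, hσ, hflag⟩ := h
    have hgood := N2 σ s _ hσ hflag
    rcases hN : N σ s with ⟨a, b, fl⟩
    rw [hN] at hσ hflag hgood
    simp only at hflag hgood
    subst hflag
    have hat : (a:ℝ) ≤ x i := hσ.1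
    have htb : x i < (b:ℝ) := hσ.2
    have hab : (a:ℝ) < b := lt_of_le_of_lt hat htb
    have hi := interp (w s) (w1 s) (w2 s) (hw0 s) (hw1 s) (cw2 s) hab ⟨hat, htb.le⟩
    rw [hw1x] at hi
    have hg2 : ((b:ℝ) - a) ^ 2 * ∫ t in (a:ℝ)..b, |w2 s t| ≤ 2 * ∫ t in (a:ℝ)..b, |w s t| := hgood.2
    obtain ⟨h, hh⟩ : ∃ h, h = (b:ℝ) - a := ⟨_, rfl⟩
    have hpos : 0 < h := by linarith
    obtain ⟨A0, hA0⟩ : ∃ A0, A0 = ∫ t in (a:ℝ)..b, |w s t| := ⟨_, rfl⟩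
    rw [← hh, ← hA0] at hi hg2
    have hi' : |u1 x| * h ^ 2 ≤ 20 * A0 := by linarith
    have hA0pos : 0 < A0 := by
      have : 0 < |u1 x| * h ^ 2 := mul_pos (abs_pos.2 hx) (by positivity)
      linarith
    obtain ⟨l, hl1, hl2⟩ := exists_mem_Ico_zpow (div_pos hA0pos hpos) (one_lt_two (α := ℝ))
    rw [le_div_iff₀ hpos] at hl1
    rw [div_lt_iff₀ hpos] at hl2
    have hsR : ‖s‖ ≤ R := by
      rw [pi_norm_le_iff_of_nonneg (by positivity)]
      intro j
      rw [hs]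
      exact (norm_le_pi_norm x (i.succAbove j)).trans hxR
    refine ⟨(σ, (a, b), l), (hmemQ _ _).2 ⟨⟨hat, htb⟩, ?_⟩, ?_⟩
    · rw [← hs]
      refine ⟨hN, by simpa using hsR, ?_, ?_⟩
      · show (2:ℝ) ^ l * ((b:ℝ) - a) ≤ ∫ t in (a:ℝ)..b, |w s t|
        rw [← hh, ← hA0]; exact hl1
      · show ∫ t in (a:ℝ)..b, |w s t| < (2:ℝ) ^ (l + 1) * ((b:ℝ) - a)
        rw [← hh, ← hA0]; exact hl2
    · intro hvol
      have v1 : (2:ℝ) ^ l ≤ ⨍ x in Q (σ, (a, b), l), |u x| :=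
        avg_lower i (fun x => |u x|) i0 a b _ hab _ (hSm (σ, (a, b), l)) (hSf _)
          (fun s' hs' => hs'.2.2.1) _ rfl hvol
      have v2 : (2:ℝ) ^ l / h ^ 2 ≤ ⨍ x in Q (σ, (a, b), l), |u2 x| := by
        refine avg_lower i (fun x => |u2 x|) i2 a b _ hab _ (hSm (σ, (a, b), l)) (hSf _)
          (fun s' hs' => ?_) _ rfl hvol
        have q1 : (2:ℝ) ^ l * ((b:ℝ) - a) ≤ ∫ t in (a:ℝ)..b, |w s' t| := hs'.2.2.1
        have q2 : InI (x i) (N σ s') := by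
          rw [show N σ s' = (a, b, true) from hs'.1]; exact hσ
        have q3 := N2 σ s' _ q2 (by rw [show N σ s' = (a, b, true) from hs'.1])
        rw [show N σ s' = (a, b, true) from hs'.1] at q3
        have q4 : ∫ t in (a:ℝ)..b, |w s' t| ≤ ((b:ℝ) - a) ^ 2 * ∫ t in (a:ℝ)..b, |w2 s' t| := q3.1
        have q5 := q1.trans q4
        rw [← hh] at q5 ⊢
        rw [div_mul_eq_mul_div, div_le_iff₀ (by positivity)]
        linarith
      have hz : 0 < (2:ℝ) ^ l := by positivity
      have hu1 : |u1 x| ≤ 40 * ((2:ℝ) ^ l / h) := by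
        rw [zpow_add_one₀ (by norm_num)] at hl2
        rw [← mul_div_assoc, le_div_iff₀ hpos]
        have : (|u1 x| * h) * h ≤ (40 * (2:ℝ) ^ l) * h := by nlinarith
        exact le_of_mul_le_mul_right this hpos
      calc |u1 x| ^ 2 ≤ (40 * ((2:ℝ) ^ l / h)) ^ 2 := by gcongr
        _ = 1600 * ((2:ℝ) ^ l / h ^ 2 * (2:ℝ) ^ l) := by field_simp; norm_num
        _ ≤ _ := mul_le_mul_of_nonneg_left (mul_le_mul v2 v1 hz.le
            ((show 0 ≤ (2:ℝ) ^ l / h ^ 2 by positivity).trans v2)) (by norm_num)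
  · intro x k hk k' hk' hc
    rw [mem_ofPred_eq, hmemQ] at hk hk'
    obtain ⟨σ, ⟨a, b⟩, l⟩ := k
    obtain ⟨τ, ⟨a', b'⟩, l'⟩ := k'
    obtain ⟨hI, hS1, -, hl⟩ := hk
    obtain ⟨hI', hS1', -, hl'⟩ := hk'
    generalize i.removeNth x = s at *
    simp only [mem_ofPred_eq] at hI hS1 hl hI' hS1' hl' hc
    have hin : InI (x i) (N σ s) := by rw [hS1]; exact hI
    have hin' : InI (x i) (N τ s) := by rw [hS1']; exact hI'
    have hst : σ = τ := by
      cases σ with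
      | nil => exact absurd (N5 s) (by rw [hS1]; simp)
      | cons c σ =>
        cases τ with
        | nil => exact absurd (N5 s) (by rw [hS1']; simp)
        | cons c' τ =>
          simp only [List.headD_cons] at hc
          subst hc
          rw [N4 s (x i) c σ τ hin hin' (by rw [hS1]) (by rw [hS1'])]
    subst hst
    have hd := hS1.symm.trans hS1'
    simp only [Prod.mk.injEq, and_true] at hd
    obtain ⟨rfl, rfl⟩ := hd
    have hpos : 0 < (b:ℝ) - a := by linarith [hI.1, hI.2]
    have k1 := lt_of_mul_lt_mul_right (lt_of_le_of_lt hl.1 hl'.2) hpos.le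
    have k2 := lt_of_mul_lt_mul_right (lt_of_le_of_lt hl'.1 hl.2) hpos.le
    rw [zpow_lt_zpow_iff_right₀ (by norm_num)] at k1 k2
    have : l = l' := by omega
    rw [this]
end

section
/- There are two positive constants C and K depending only on the dimension n such that for every u : ℝⁿ → ℝ of class C² with compact support, there exists a countable family 𝒫 = (P_m) of measurable subsets of ℝⁿ, each of finite positive Lebesgue measure, such that for every x ∈ ℝⁿ, |∇u(x)|² ≤ C · (T_𝒫 |∇²u|)(x) · (T_𝒫 |u|)(x) and Σ_m χ_{P_m}(x) ≤ K, where |∇u|(x) = Σ_{i=1}^n |∂u/∂x_i(x)| and |∇²u|(x) = Σ_{i,j=1}^n |∂²u/∂x_i∂x_j(x)|. (One may take K = 5n.) -/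
open MeasureTheory ENNReal Set

/-- The first partial derivative of `u : ℝⁿ → ℝ` in the `i`-th coordinate
direction. -/
noncomputable def pderiv1 (n : ℕ) (i : Fin n)
    (u : (Fin n → ℝ) → ℝ) : (Fin n → ℝ) → ℝ :=
  fun x => fderiv ℝ u x (Pi.single i 1)

/-- `|∇u|(x) := Σ_i |∂u/∂x_i(x)|`. -/
noncomputable def grad1Abs (n : ℕ) (u : (Fin n → ℝ) → ℝ) : (Fin n → ℝ) → ℝ :=
  fun x => ∑ i : Fin n, |pderiv1 n i u x|

/-- `|∇²u|(x) := Σ_{i,j} |∂²u/∂x_i∂x_j(x)|`. -/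
noncomputable def grad2Abs (n : ℕ) (u : (Fin n → ℝ) → ℝ) : (Fin n → ℝ) → ℝ :=
  fun x => ∑ i : Fin n, ∑ j : Fin n, |pderiv1 n i (pderiv1 n j u) x|


/-! ### One dimensional facts -/

lemma oneD_var (g g' : ℝ → ℝ) (hg : ∀ t, HasDerivAt g (g' t) t) (hc : Continuous g')
    {a b s : ℝ} (has : a < s) (hsb : s < b) :
    |g s - g a| ≤ ∫ t in Ioo a b, |g' t| := by
  have h1 : ∫ y in a..s, g' y = g s - g a :=
    intervalIntegral.integral_eq_sub_of_hasDerivAt (fun x _ => hg x) (hc.intervalIntegrable _ _)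
  rw [← h1, ← integral_Ioc_eq_integral_Ioo, ← intervalIntegral.integral_of_le (has.trans hsb).le]
  refine (intervalIntegral.abs_integral_le_integral_abs has.le).trans ?_
  exact intervalIntegral.integral_mono_interval le_rfl has.le hsb.le
    (Filter.Eventually.of_forall fun x => abs_nonneg _) (hc.abs.intervalIntegrable _ _)

lemma oneD_mean (f f' : ℝ → ℝ) (hf : ∀ t, HasDerivAt f (f' t) t)
    {a b l : ℝ} (hab : a < b) (hl : ∀ t ∈ Ioo a b, l ≤ |f' t|) :
    l * (b - a) ^ 2 / 4 ≤ ∫ t in Ioo a b, |f t| := by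
  have hc : Continuous f := continuous_iff_continuousAt.2 fun t => (hf t).continuousAt
  have hi : ∀ p q, IntervalIntegrable (fun t => |f t|) volume p q :=
    fun p q => hc.abs.intervalIntegrable _ _
  rw [← integral_Ioc_eq_integral_Ioo, ← intervalIntegral.integral_of_le hab.le]
  set h := (b - a) / 2 with hh
  have hpos : 0 < h := by rw [hh]; linarith
  have hi2 : IntervalIntegrable (fun t => |f (t + h)|) volume a (a + h) :=
    (Continuous.abs (hc.comp (by fun_prop))).intervalIntegrable _ _
  have hsplit : ∫ t in a..b, |f t| = ∫ t in a..(a + h), (|f t| + |f (t + h)|) := by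
    rw [intervalIntegral.integral_add (hi _ _) hi2,
      intervalIntegral.integral_comp_add_right (fun t => |f t|) h,
      intervalIntegral.integral_add_adjacent_intervals (hi _ _) (hi _ _)]
    congr 1
    rw [hh]; ring
  rw [hsplit]
  have hconst : ∫ t in a..(a + h), (l * h) = l * (b - a) ^ 2 / 4 := by
    rw [intervalIntegral.integral_const, smul_eq_mul, hh]; ring
  rw [← hconst]
  refine intervalIntegral.integral_mono_on_of_le_Ioo (by linarith) (by simp)
    ((hi _ _).add hi2) ?_
  intro t ht
  obtain ⟨c, hcm, hce⟩ := exists_hasDerivAt_eq_slope f f' (a := t) (b := t + h) (by linarith)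
    hc.continuousOn (fun x _ => hf x)
  have h1 := hl c ⟨ht.1.trans hcm.1, by have := hcm.2; have := ht.2; rw [hh] at *; linarith⟩
  have h2 : f (t + h) - f t = f' c * h := by
    rw [hce, add_sub_cancel_left, div_mul_cancel₀ _ hpos.ne']
  have h3 : |f (t + h) - f t| ≤ |f t| + |f (t + h)| := by
    rw [add_comm |f t|]; exact abs_sub _ _
  rw [h2, abs_mul, abs_of_pos hpos] at h3
  nlinarith

/-- An interval component around a point. -/
lemma exists_component (U : Set ℝ) (hU : IsOpen U) {t : ℝ} (ht : t ∈ U)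
    {R : ℝ} (hR : ∀ s ∈ U, |s| ≤ R) :
    ∃ a b, a < t ∧ t < b ∧ Ioo a b ⊆ U ∧ a ∉ U ∧ b ∉ U := by
  have htR := abs_le.1 (hR t ht)
  have hcl1 : IsClosed (Uᶜ ∩ Iic t) := hU.isClosed_compl.inter isClosed_Iic
  have hcl2 : IsClosed (Uᶜ ∩ Ici t) := hU.isClosed_compl.inter isClosed_Ici
  have hne1 : (Uᶜ ∩ Iic t).Nonempty := by
    refine ⟨-R - 1, fun h => ?_, ?_⟩
    · have := abs_le.1 (hR _ h); linarith
    · simp only [mem_Iic]; linarith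
  have hne2 : (Uᶜ ∩ Ici t).Nonempty := by
    refine ⟨R + 1, fun h => ?_, ?_⟩
    · have := abs_le.1 (hR _ h); linarith
    · simp only [mem_Ici]; linarith
  have hb1 : BddAbove (Uᶜ ∩ Iic t) := ⟨t, fun x hx => hx.2⟩
  have hb2 : BddBelow (Uᶜ ∩ Ici t) := ⟨t, fun x hx => hx.2⟩
  have ha := hcl1.csSup_mem hne1 hb1
  have hb := hcl2.csInf_mem hne2 hb2
  refine ⟨sSup (Uᶜ ∩ Iic t), sInf (Uᶜ ∩ Ici t), ?_, ?_, ?_, ha.1, hb.1⟩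
  · exact lt_of_le_of_ne ha.2 fun h => ha.1 (by rw [h]; exact ht)
  · exact lt_of_le_of_ne hb.2 fun h => hb.1 (by rw [← h]; exact ht)
  · intro s hs
    by_contra hsU
    rcases le_total s t with h | h
    · exact absurd (le_csSup hb1 ⟨hsU, h⟩) (not_le.2 hs.1)
    · exact absurd (csInf_le hb2 ⟨hsU, h⟩) (not_le.2 hs.2)

lemma component_unique {U : Set ℝ} {a b a' b' s : ℝ} (h : Ioo a b ⊆ U) (h' : Ioo a' b' ⊆ U)
    (ha : a ∉ U) (hb : b ∉ U) (ha' : a' ∉ U) (hb' : b' ∉ U)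
    (hs : s ∈ Ioo a b) (hs' : s ∈ Ioo a' b') : a = a' ∧ b = b' := by
  constructor
  · rcases lt_trichotomy a a' with hl | hl | hl
    · exact absurd (h ⟨hl, hs'.1.trans hs.2⟩) ha'
    · exact hl
    · exact absurd (h' ⟨hl, hs.1.trans hs'.2⟩) ha
  · rcases lt_trichotomy b b' with hl | hl | hl
    · exact absurd (h' ⟨hs'.1.trans hs.2, hl⟩) hb
    · exact hl
    · exact absurd (h ⟨hs.1.trans hs'.2, hl⟩) hb'

/-! ### Tubes -/

/-- The tube `I × Q` with `I` in the `i`-th direction. -/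
def tube {m : ℕ} (i : Fin (m + 1)) (I : Set ℝ) (Q : Set (Fin m → ℝ)) : Set (Fin (m + 1) → ℝ) :=
  (MeasurableEquiv.piFinSuccAbove (fun _ => ℝ) i) ⁻¹' (I ×ˢ Q)

lemma mem_tube {m : ℕ} {i : Fin (m + 1)} {I : Set ℝ} {Q : Set (Fin m → ℝ)}
    {x : Fin (m + 1) → ℝ} : x ∈ tube i I Q ↔ x i ∈ I ∧ i.removeNth x ∈ Q := Iff.rfl

lemma measurableSet_tube {m : ℕ} (i : Fin (m + 1)) {I : Set ℝ} {Q : Set (Fin m → ℝ)}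
    (hI : MeasurableSet I) (hQ : MeasurableSet Q) : MeasurableSet (tube i I Q) :=
  (MeasurableEquiv.piFinSuccAbove (fun _ => ℝ) i).measurable (hI.prod hQ)

lemma volume_tube {m : ℕ} (i : Fin (m + 1)) (I : Set ℝ) (Q : Set (Fin m → ℝ)) :
    volume (tube i I Q) = volume I * volume Q := by
  unfold tube
  rw [(volume_preserving_piFinSuccAbove (fun _ => ℝ) i).measure_preimage_equiv]
  exact Measure.prod_prod _ _

lemma average_tube {m : ℕ} (i : Fin (m + 1)) {a b c : ℝ} (hab : a < b) {Q : Set (Fin m → ℝ)}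
    (hQ : MeasurableSet Q) (hQ0 : volume Q ≠ 0) (hQt : volume Q ≠ ⊤)
    (f : (Fin (m + 1) → ℝ) → ℝ) (hf : Integrable f)
    (hc : ∀ y ∈ Q, c ≤ ∫ t in Ioo a b, f (i.insertNth t y)) :
    c / (b - a) ≤ ⨍ x in tube i (Ioo a b) Q, f x := by
  set e := MeasurableEquiv.piFinSuccAbove (fun _ : Fin (m + 1) => ℝ) i with he
  have hmp : MeasurePreserving e volume volume :=
    volume_preserving_piFinSuccAbove (fun _ => ℝ) i
  set F : ℝ × (Fin m → ℝ) → ℝ := fun p => f (i.insertNth p.1 p.2) with hF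
  have hFe : ∀ x, F (e x) = f x := fun x => by
    simp only [hF, he]
    exact congrArg f (Fin.insertNth_self_removeNth i x)
  have hFi : Integrable F (volume.prod volume) := by
    have : Integrable (F ∘ e) volume := by
      have h : F ∘ e = f := funext hFe
      rw [h]; exact hf
    exact (hmp.integrable_comp_emb e.measurableEmbedding).1 this
  have h1 : ∫ x in tube i (Ioo a b) Q, f x = ∫ p in Ioo a b ×ˢ Q, F p ∂(volume.prod volume) := by
    rw [← Measure.volume_eq_prod, ← hmp.setIntegral_preimage_emb e.measurableEmbedding]
    simp only [hFe]
    rfl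
  have hFi' : Integrable F ((volume.restrict (Ioo a b)).prod (volume.restrict Q)) := by
    rw [Measure.prod_restrict]; exact hFi.restrict
  have h2 : c * volume.real Q ≤ ∫ x in tube i (Ioo a b) Q, f x := by
    rw [h1, ← Measure.prod_restrict, integral_prod_symm _ hFi']
    exact setIntegral_ge_of_const_le_real hQ hQt hc hFi'.integral_prod_right
  have hQr : 0 < volume.real Q := ENNReal.toReal_pos hQ0 hQt
  have hv : volume.real (tube i (Ioo a b) Q) = (b - a) * volume.real Q := by
    rw [Measure.real, volume_tube, ENNReal.toReal_mul, Real.volume_Ioo,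
      ENNReal.toReal_ofReal (by linarith)]
    rfl
  rw [setAverage_eq, hv, smul_eq_mul, inv_mul_eq_div, div_le_div_iff₀ (by linarith)
    (mul_pos (by linarith) hQr)]
  have : 0 < b - a := by linarith
  nlinarith

/-! ### Calculus along lines -/

lemma hasDerivAt_line {m : ℕ} (i : Fin (m + 1)) (y : Fin m → ℝ) {v : (Fin (m + 1) → ℝ) → ℝ}
    (hv : ContDiff ℝ 1 v) (t : ℝ) :
    HasDerivAt (fun t : ℝ => v (i.insertNth (α := fun _ => ℝ) t y))
      (pderiv1 (m + 1) i v (i.insertNth (α := fun _ => ℝ) t y)) t := by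
  have h1 : HasDerivAt (fun t : ℝ => i.insertNth (α := fun _ => ℝ) t y) (Pi.single i 1) t := by
    have := hasDerivAt_update (i.insertNth (α := fun _ => ℝ) 0 y) i t
    have h : Function.update (i.insertNth (α := fun _ => ℝ) 0 y) i
        = fun t : ℝ => i.insertNth (α := fun _ => ℝ) t y := by
      funext s; exact Fin.update_insertNth (α := fun _ => ℝ) i 0 s y
    rwa [h] at this
  exact ((hv.differentiable (by norm_num)).differentiableAt.hasFDerivAt (x := _)).comp_hasDerivAt t h1

lemma contDiff_pderiv1 {n : ℕ} (i : Fin n) {u : (Fin n → ℝ) → ℝ} {k l : WithTop ℕ∞}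
    (hu : ContDiff ℝ k u) (h : l + 1 ≤ k) : ContDiff ℝ l (pderiv1 n i u) :=
  (hu.fderiv_right h).clm_apply contDiff_const

lemma hasCompactSupport_pderiv1 {n : ℕ} (i : Fin n) {u : (Fin n → ℝ) → ℝ}
    (hu : HasCompactSupport u) : HasCompactSupport (pderiv1 n i u) :=
  hu.fderiv_apply ℝ _

lemma continuous_insertNth {m : ℕ} (i : Fin (m + 1)) (y : Fin m → ℝ) :
    Continuous (fun t : ℝ => i.insertNth (α := fun _ => ℝ) t y) :=
  Continuous.finInsertNth i continuous_id continuous_const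

lemma continuous_pderiv1_pderiv1 {n : ℕ} (i j : Fin n) {u : (Fin n → ℝ) → ℝ}
    (hu : ContDiff ℝ 2 u) : Continuous (pderiv1 n i (pderiv1 n j u)) :=
  (contDiff_pderiv1 (l := 0) i (contDiff_pderiv1 (l := 1) j hu (by norm_num))
    (by norm_num)).continuous

lemma integrable_grad2Abs {n : ℕ} {u : (Fin n → ℝ) → ℝ}
    (hu : ContDiff ℝ 2 u) (hs : HasCompactSupport u) : Integrable (grad2Abs n u) := by
  unfold grad2Abs
  refine integrable_finsetSum _ fun i _ => integrable_finsetSum _ fun j _ => ?_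
  exact ((continuous_pderiv1_pderiv1 i j hu).integrable_of_hasCompactSupport
    (hasCompactSupport_pderiv1 i (hasCompactSupport_pderiv1 j hs))).abs

lemma continuous_grad2Abs {n : ℕ} {u : (Fin n → ℝ) → ℝ}
    (hu : ContDiff ℝ 2 u) : Continuous (grad2Abs n u) :=
  continuous_finsetSum _ fun i _ => continuous_finsetSum _ fun j _ =>
    (continuous_pderiv1_pderiv1 i j hu).abs

lemma le_grad2Abs {n : ℕ} (i : Fin n) (u : (Fin n → ℝ) → ℝ) (x) :
    |pderiv1 n i (pderiv1 n i u) x| ≤ grad2Abs n u x := by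
  unfold grad2Abs
  refine le_trans ?_ (Finset.single_le_sum
    (f := fun i => ∑ j : Fin n, |pderiv1 n i (pderiv1 n j u) x|)
    (fun a _ => Finset.sum_nonneg fun b _ => abs_nonneg _) (Finset.mem_univ i))
  exact Finset.single_le_sum (f := fun j => |pderiv1 n i (pderiv1 n j u) x|)
    (fun b _ => abs_nonneg _) (Finset.mem_univ i)

/-- Grid cell of side `d`. -/
def cell {m : ℕ} (d : ℝ) (z : Fin m → ℤ) : Set (Fin m → ℝ) :=
  Set.univ.pi fun j => Ico (d * z j) (d * z j + d)

lemma mem_cell_floor {m : ℕ} {d : ℝ} (hd : 0 < d) (y : Fin m → ℝ) :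
    y ∈ cell d (fun j => ⌊y j / d⌋) := by
  intro j _
  have h1 := Int.floor_le (y j / d)
  have h2 := Int.lt_floor_add_one (y j / d)
  rw [le_div_iff₀ hd] at h1
  rw [div_lt_iff₀ hd] at h2
  exact ⟨by linarith, by linarith⟩

lemma cell_unique {m : ℕ} {d : ℝ} (hd : 0 < d) {y : Fin m → ℝ} {z : Fin m → ℤ}
    (h : y ∈ cell d z) : z = fun j => ⌊y j / d⌋ := by
  funext j
  have h1 := h j (mem_univ j)
  symm
  rw [Int.floor_eq_iff, le_div_iff₀ hd, div_lt_iff₀ hd]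
  exact ⟨by linarith [h1.1], by linarith [h1.2]⟩

lemma measurableSet_cell {m : ℕ} (d : ℝ) (z : Fin m → ℤ) : MeasurableSet (cell d z) :=
  MeasurableSet.univ_pi fun _ => measurableSet_Ico

lemma volume_cell {m : ℕ} {d : ℝ} (z : Fin m → ℤ) :
    volume (cell d z) = ENNReal.ofReal d ^ m := by
  unfold cell
  rw [Real.volume_pi_Ico]
  simp

lemma dist_insertNth_cell {m : ℕ} {d : ℝ} (hd : 0 < d) (i : Fin (m + 1)) {y : Fin m → ℝ}
    {z : Fin m → ℤ} (h : y ∈ cell d z) (t : ℝ) :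
    dist (i.insertNth (α := fun _ => ℝ) t y)
      (i.insertNth (α := fun _ => ℝ) t (fun j => d * z j)) ≤ d := by
  rw [dist_pi_le_iff hd.le]
  intro j
  refine Fin.succAboveCases i ?_ ?_ j
  · simp [hd.le]
  · intro k
    have h1 := h k (mem_univ k)
    simp only [Fin.insertNth_apply_succAbove]
    rw [Real.dist_eq, abs_le]
    exact ⟨by linarith [h1.1], by linarith [h1.2]⟩

/-- The construction for one direction and one dyadic height. -/
lemma band {m : ℕ} (i : Fin (m + 1)) {u : (Fin (m + 1) → ℝ) → ℝ} (hu : ContDiff ℝ 2 u)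
    (hs : HasCompactSupport u) {r : ℝ} (hr : 0 < r) :
    ∃ S : Set (Set (Fin (m + 1) → ℝ)), S.PairwiseDisjoint id ∧
      (∀ P ∈ S, MeasurableSet P ∧ 0 < volume P ∧ volume P < ⊤) ∧
      (∀ P ∈ S, ∀ x ∈ P, r / 4 < |pderiv1 (m + 1) i u x| ∧ |pderiv1 (m + 1) i u x| < 8 * r) ∧
      (∀ P ∈ S, ∃ A B : ℝ, 0 ≤ A ∧ 0 ≤ B ∧ A ≤ ⨍ t in P, grad2Abs (m + 1) u t ∧
        B ≤ ⨍ t in P, |u t| ∧ r ^ 2 / 64 ≤ A * B) ∧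
      (∀ x, r ≤ |pderiv1 (m + 1) i u x| → |pderiv1 (m + 1) i u x| ≤ 2 * r → ∃ P ∈ S, x ∈ P) := by
  set g := pderiv1 (m + 1) i u with hg
  have hg1 : ContDiff ℝ 1 g := contDiff_pderiv1 i hu (by norm_num)
  have hgs : HasCompactSupport g := hasCompactSupport_pderiv1 i hs
  have hgc : Continuous g := hg1.continuous
  obtain ⟨d, hd, hdg⟩ : ∃ d > 0, ∀ x y, dist x y ≤ d → |g x - g y| < r / 16 := by
    obtain ⟨d, hd, h⟩ := Metric.uniformContinuous_iff.1
      (hgs.uniformContinuous_of_continuous hgc) (r / 16) (by positivity)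
    exact ⟨d / 2, by positivity, fun x y hxy => h (lt_of_le_of_lt hxy (by linarith))⟩
  obtain ⟨R, hR⟩ : ∃ R, ∀ x, g x ≠ 0 → ‖x‖ ≤ R := by
    obtain ⟨R, hR⟩ := hgs.isCompact.isBounded.exists_norm_le
    exact ⟨R, fun x hx => hR x (subset_tsupport g hx)⟩
  -- the line through the corner of a cell
  let L : (Fin m → ℤ) → ℝ → ℝ := fun z t =>
    g (i.insertNth (α := fun _ => ℝ) t (fun j => d * z j))
  let U : (Fin m → ℤ) → Set ℝ := fun z => {t | r / 2 < |L z t| ∧ |L z t| < 4 * r}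
  have hLc : ∀ z, Continuous (L z) := fun z => hgc.comp (continuous_insertNth i _)
  have hUo : ∀ z, IsOpen (U z) := fun z =>
    (isOpen_lt continuous_const (hLc z).abs).inter (isOpen_lt (hLc z).abs continuous_const)
  have hUR : ∀ z, ∀ t ∈ U z, |t| ≤ R := by
    intro z t ht
    have h0 : L z t ≠ 0 := by
      intro h
      have := ht.1
      rw [h, abs_zero] at this
      linarith
    have h1 := hR _ h0
    have h2 := norm_le_pi_norm (i.insertNth (α := fun _ => ℝ) t (fun j => d * z j)) i
    rw [Fin.insertNth_apply_same] at h2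
    exact h2.trans h1
  have hLg : ∀ z, ∀ y ∈ cell d z, ∀ t,
      |g (i.insertNth (α := fun _ => ℝ) t y) - L z t| < r / 16 := fun z y hy t =>
    hdg _ _ (dist_insertNth_cell hd i hy t)
  have hcell0 : ∀ z : Fin m → ℤ, volume (cell d z) ≠ 0 := fun z => by
    rw [volume_cell]; exact pow_ne_zero _ (by simpa using hd)
  have hcellt : ∀ z : Fin m → ℤ, volume (cell d z) ≠ ⊤ := fun z => by
    rw [volume_cell]; exact ENNReal.pow_ne_top ENNReal.ofReal_ne_top
  have habs : ∀ p q : ℝ, |p - q| < r / 16 → |p| < |q| + r / 16 ∧ |q| < |p| + r / 16 := by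
    intro p q h
    have h1 := abs_sub_abs_le_abs_sub p q
    have h2 := abs_sub_abs_le_abs_sub q p
    rw [abs_sub_comm q p] at h2
    exact ⟨by linarith, by linarith⟩
  refine ⟨{P | ∃ (z : Fin m → ℤ) (a b t : ℝ), a < t ∧ t < b ∧ Ioo a b ⊆ U z ∧ a ∉ U z ∧ b ∉ U z ∧
    15 / 16 * r ≤ |L z t| ∧ |L z t| ≤ 33 / 16 * r ∧ P = tube i (Ioo a b) (cell d z)},
    ?_, ?_, ?_, ?_, ?_⟩
  · rintro P ⟨z, a, b, t, -, -, hab, ha, hb, -, -, rfl⟩ P' ⟨z', a', b', t', -, -, hab', ha', hb', -, -, rfl⟩ hne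
    refine Set.disjoint_left.2 fun x hx hx' => hne ?_
    simp only [id, mem_tube] at hx hx'
    have hz : z = z' := (cell_unique hd hx.2).trans (cell_unique hd hx'.2).symm
    subst hz
    obtain ⟨h1, h2⟩ := component_unique hab hab' ha hb ha' hb' hx.1 hx'.1
    rw [h1, h2]
  · rintro P ⟨z, a, b, t, hat, htb, hab, ha, hb, -, -, rfl⟩
    refine ⟨measurableSet_tube i measurableSet_Ioo (measurableSet_cell d z), ?_, ?_⟩
    · rw [volume_tube, Real.volume_Ioo]
      exact ENNReal.mul_pos (by simp; linarith) (hcell0 z)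
    · rw [volume_tube, Real.volume_Ioo]
      exact ENNReal.mul_lt_top ENNReal.ofReal_lt_top (hcellt z).lt_top
  · rintro P ⟨z, a, b, t, hat, htb, hab, ha, hb, -, -, rfl⟩ x hx
    rw [mem_tube] at hx
    have h1 := hLg z _ hx.2 (x i)
    have hxx : i.insertNth (α := fun _ => ℝ) (x i) (i.removeNth x) = x :=
      Fin.insertNth_self_removeNth i x
    rw [hxx] at h1
    have h2 := hab hx.1
    obtain ⟨h3, h4⟩ := habs _ _ h1
    exact ⟨by linarith [h2.1], by linarith [h2.2]⟩
  · rintro P ⟨z, a, b, t, hat, htb, hab, ha, hb, ht1, ht2, rfl⟩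
    have hba : 0 < b - a := by linarith
    refine ⟨r / 4 / (b - a), (r / 4 * (b - a) ^ 2 / 4) / (b - a), by positivity, by positivity,
      ?_, ?_, ?_⟩
    · refine average_tube i (by linarith) (measurableSet_cell d z) (hcell0 z) (hcellt z) _
        (integrable_grad2Abs hu hs) fun y hy => ?_
      have h1 := oneD_var (fun t : ℝ => g (i.insertNth (α := fun _ => ℝ) t y)) _
        (hasDerivAt_line i y hg1)
        ((continuous_pderiv1_pderiv1 i i hu).comp (continuous_insertNth i y)) hat htb
      have h2 : r / 4 ≤ |g (i.insertNth (α := fun _ => ℝ) t y)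
          - g (i.insertNth (α := fun _ => ℝ) a y)| := by
        obtain ⟨p1, p2⟩ := habs _ _ (hLg z y hy t)
        obtain ⟨q1, q2⟩ := habs _ _ (hLg z y hy a)
        have ha' : |L z a| ≤ r / 2 ∨ 4 * r ≤ |L z a| := by
          by_contra! h
          exact ha h
        rcases ha' with h | h
        · refine le_trans ?_ (abs_sub_abs_le_abs_sub _ _)
          linarith
        · rw [abs_sub_comm]
          refine le_trans ?_ (abs_sub_abs_le_abs_sub _ _)
          linarith
      refine h2.trans (h1.trans ?_)
      refine setIntegral_mono_on ?_ ?_ measurableSet_Ioo fun s _ => le_grad2Abs i u _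
      · exact (((continuous_pderiv1_pderiv1 i i hu).comp
          (continuous_insertNth i y)).abs.integrableOn_Icc (a := a) (b := b)).mono_set
          Ioo_subset_Icc_self
      · exact (((continuous_grad2Abs hu).comp
          (continuous_insertNth i y)).integrableOn_Icc (a := a) (b := b)).mono_set
          Ioo_subset_Icc_self
    · refine average_tube i (by linarith) (measurableSet_cell d z) (hcell0 z) (hcellt z) _
        (hu.continuous.integrable_of_hasCompactSupport hs).abs fun y hy => ?_
      refine oneD_mean (fun t : ℝ => u (i.insertNth (α := fun _ => ℝ) t y)) _
        (hasDerivAt_line i y (hu.of_le (by norm_num))) (by linarith) fun s hs => ?_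
      obtain ⟨p1, p2⟩ := habs _ _ (hLg z y hy s)
      have := (hab hs).1
      change r / 4 ≤ |g (i.insertNth (α := fun _ => ℝ) s y)|
      linarith
    · apply le_of_eq
      field_simp
      norm_num
  · intro x hx1 hx2
    set z : Fin m → ℤ := fun j => ⌊i.removeNth x j / d⌋ with hz
    have hmem : i.removeNth x ∈ cell d z := mem_cell_floor hd _
    have h1 := hLg z _ hmem (x i)
    have hxx : i.insertNth (α := fun _ => ℝ) (x i) (i.removeNth x) = x :=
      Fin.insertNth_self_removeNth i x
    rw [hxx] at h1
    obtain ⟨h3, h4⟩ := habs _ _ h1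
    have hU : x i ∈ U z := ⟨by linarith, by linarith⟩
    obtain ⟨a, b, h5, h6, h7, h8, h9⟩ := exists_component (U z) (hUo z) hU (hUR z)
    exact ⟨_, ⟨z, a, b, x i, h5, h6, h7, h8, h9, by linarith, by linarith, rfl⟩,
      mem_tube.2 ⟨⟨h5, h6⟩, hmem⟩⟩

lemma sum_band_le {n : ℕ} {u : (Fin n → ℝ) → ℝ} (S : Fin n × ℤ → Set (Set (Fin n → ℝ)))
    (hd : ∀ p, (S p).PairwiseDisjoint id)
    (hb : ∀ p, ∀ P ∈ S p, ∀ x ∈ P, (2 : ℝ) ^ p.2 / 4 < |pderiv1 n p.1 u x| ∧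
      |pderiv1 n p.1 u x| < 8 * (2 : ℝ) ^ p.2) (x : Fin n → ℝ) :
    ∑' q : (Σ p, S p), (q.2 : Set (Fin n → ℝ)).indicator (fun _ => (1 : ℝ≥0∞)) x
      ≤ ENNReal.ofReal (5 * n + 1) := by
  classical
  rw [ENNReal.tsum_sigma (fun p (P : S p) =>
    (P : Set (Fin n → ℝ)).indicator (fun _ => (1 : ℝ≥0∞)) x)]
  rw [ENNReal.tsum_prod (f := fun i k => ∑' P : S (i, k),
    (P : Set (Fin n → ℝ)).indicator (fun _ => (1 : ℝ≥0∞)) x), tsum_fintype]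
  have hle1 : ∀ p, ∑' P : S p, (P : Set (Fin n → ℝ)).indicator (fun _ => (1 : ℝ≥0∞)) x ≤ 1 := by
    intro p
    by_cases h : ∃ P : S p, x ∈ (P : Set (Fin n → ℝ))
    · obtain ⟨P, hP⟩ := h
      rw [tsum_eq_single P]
      · exact Set.indicator_le_self' (by simp) x
      · intro P' hne
        refine Set.indicator_of_notMem (fun hx => ?_) _
        have := hd p P.2 P'.2 (fun h => hne (Subtype.ext h.symm))
        exact Set.disjoint_left.1 this hP hx
    · push Not at h
      rw [ENNReal.tsum_eq_zero.2 fun P => Set.indicator_of_notMem (h P) _]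
      exact zero_le_one
  have hle2 : ∀ i : Fin n, ∑' k : ℤ, ∑' P : S (i, k),
      (P : Set (Fin n → ℝ)).indicator (fun _ => (1 : ℝ≥0∞)) x ≤ 5 := by
    intro i
    set v := |pderiv1 n i u x| with hv
    set l := Int.log 2 v with hl
    rw [tsum_eq_sum (s := Finset.Icc (l - 2) (l + 2))]
    · refine (Finset.sum_le_sum fun k _ => hle1 (i, k)).trans ?_
      simp only [Finset.sum_const, Int.card_Icc]
      have : (l + 2 + 1 - (l - 2)).toNat = 5 := by
        rw [show l + 2 + 1 - (l - 2) = 5 by ring]; rfl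
      rw [this]; norm_num
    · intro k hk
      refine ENNReal.tsum_eq_zero.2 fun P => Set.indicator_of_notMem (fun hx => hk ?_) _
      obtain ⟨h1, h2⟩ := hb (i, k) P P.2 x hx
      simp only at h1 h2
      rw [← hv] at h1 h2
      have h2k : (0 : ℝ) < 2 ^ k := by positivity
      have hvpos : 0 < v := lt_trans (by positivity) h1
      have h3 : ((2 : ℕ) : ℝ) ^ l ≤ v := Int.zpow_log_le_self (by norm_num) hvpos
      have h4 : v < ((2 : ℕ) : ℝ) ^ (l + 1) := Int.lt_zpow_succ_log_self (by norm_num) v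
      push_cast at h3 h4
      have h5 : (2 : ℝ) ^ (k - 2) < 2 ^ (l + 1) := by
        rw [zpow_sub₀ (by norm_num)]
        refine lt_trans ?_ h4
        norm_num; linarith
      have h6 : (2 : ℝ) ^ l < 2 ^ (k + 3) := by
        rw [zpow_add₀ (by norm_num)]
        refine lt_of_le_of_lt h3 ?_
        norm_num; linarith
      rw [zpow_lt_zpow_iff_right₀ (by norm_num)] at h5 h6
      rw [Finset.mem_Icc]
      omega
  refine (Finset.sum_le_sum fun i _ => hle2 i).trans ?_
  rw [Finset.sum_const, Finset.card_univ, Fintype.card_fin, nsmul_eq_mul,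
    ENNReal.ofReal_add (by positivity) (by norm_num), ENNReal.ofReal_mul (by norm_num),
    ENNReal.ofReal_natCast]
  have h5 : ENNReal.ofReal 5 = 5 := by norm_num
  rw [h5, mul_comm]
  exact le_self_add

lemma exists_large_pderiv {n : ℕ} (u : (Fin n → ℝ) → ℝ) (x : Fin n → ℝ)
    (h : grad1Abs n u x ≠ 0) :
    ∃ i, 0 < |pderiv1 n i u x| ∧ grad1Abs n u x ≤ n * |pderiv1 n i u x| := by
  have hn : (Finset.univ : Finset (Fin n)).Nonempty := by
    by_contra hne
    rw [Finset.not_nonempty_iff_eq_empty] at hne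
    exact h (by simp [grad1Abs, hne])
  obtain ⟨i, -, hi⟩ := Finset.exists_max_image Finset.univ (fun i => |pderiv1 n i u x|) hn
  have hle : grad1Abs n u x ≤ n * |pderiv1 n i u x| := by
    have := Finset.sum_le_card_nsmul Finset.univ (fun i => |pderiv1 n i u x|) _ hi
    simpa [grad1Abs] using this
  refine ⟨i, ?_, hle⟩
  rcases (abs_nonneg (pderiv1 n i u x)).lt_or_eq with h0 | h0
  · exact h0
  · exfalso
    rw [← h0, mul_zero] at hle
    exact h (le_antisymm hle (Finset.sum_nonneg fun _ _ => abs_nonneg _))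

lemma final_arith {G v r A B n : ℝ} (hG : 0 ≤ G) (hn : 0 ≤ n) (h1 : G ≤ n * v) (hv : 0 < v)
    (h2 : v ≤ 2 * r) (h3 : r ^ 2 / 64 ≤ A * B) : G ^ 2 ≤ (256 * n ^ 2 + 1) * (A * B) := by
  have a1 : G ^ 2 ≤ (n * v) ^ 2 := pow_le_pow_left₀ hG h1 2
  have a2 : v ^ 2 ≤ (2 * r) ^ 2 := pow_le_pow_left₀ hv.le h2 2
  have a3 : 0 ≤ A * B := le_trans (by positivity) h3
  have a4 : n ^ 2 * v ^ 2 ≤ n ^ 2 * (256 * (A * B)) :=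
    mul_le_mul_of_nonneg_left (by nlinarith) (by positivity)
  nlinarith

/-- Sparse pointwise domination `|∇u|² ≤ C · T_𝒫|∇²u| · T_𝒫|u|` by a sparse
averaging operator with overlap at most `K`, for `u ∈ C²_c(ℝⁿ)`; the constants
`C` and `K` depend only on `n`. -/
theorem sparse_pointwise_estimate_gradient (n : ℕ) :
    ∃ C K : ℝ, 0 < C ∧ 0 < K ∧
      ∀ (u : (Fin n → ℝ) → ℝ), ContDiff ℝ 2 u → HasCompactSupport u →
        ∃ (ι : Type) (_ : Countable ι) (P : ι → Set (Fin n → ℝ)),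
          (∀ m, MeasurableSet (P m) ∧ 0 < volume (P m) ∧ volume (P m) < ⊤) ∧
          (∀ x, ENNReal.ofReal (grad1Abs n u x ^ 2) ≤
            ENNReal.ofReal C
              * (∑' m, ENNReal.ofReal (⨍ t in P m, grad2Abs n u t)
                  * (P m).indicator (fun _ => (1 : ℝ≥0∞)) x)
              * (∑' m, ENNReal.ofReal (⨍ t in P m, |u t|)
                  * (P m).indicator (fun _ => (1 : ℝ≥0∞)) x)) ∧
          (∀ x, ∑' m, (P m).indicator (fun _ => (1 : ℝ≥0∞)) x ≤
            ENNReal.ofReal K) := by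
  refine ⟨256 * (n : ℝ) ^ 2 + 1, 5 * n + 1, by positivity, by positivity, ?_⟩
  intro u hu hs
  have hband : ∀ p : Fin n × ℤ, ∃ S : Set (Set (Fin n → ℝ)), S.PairwiseDisjoint id ∧
      (∀ P ∈ S, MeasurableSet P ∧ 0 < volume P ∧ volume P < ⊤) ∧
      (∀ P ∈ S, ∀ x ∈ P, (2 : ℝ) ^ p.2 / 4 < |pderiv1 n p.1 u x| ∧
        |pderiv1 n p.1 u x| < 8 * (2 : ℝ) ^ p.2) ∧
      (∀ P ∈ S, ∃ A B : ℝ, 0 ≤ A ∧ 0 ≤ B ∧ A ≤ ⨍ t in P, grad2Abs n u t ∧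
        B ≤ ⨍ t in P, |u t| ∧ ((2 : ℝ) ^ p.2) ^ 2 / 64 ≤ A * B) ∧
      (∀ x, (2 : ℝ) ^ p.2 ≤ |pderiv1 n p.1 u x| → |pderiv1 n p.1 u x| ≤ 2 * (2 : ℝ) ^ p.2 →
        ∃ P ∈ S, x ∈ P) := by
    rintro ⟨i, k⟩
    cases n with
    | zero => exact i.elim0
    | succ m => exact band i hu hs (by positivity)
  choose S hdisj hmeas hbd havg hcov using hband
  have hcount : ∀ p, Countable (S p) := by
    intro p
    have h := Measure.countable_meas_pos_of_disjoint_iUnion (μ := volume)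
      (As := fun P : S p => (P : Set (Fin n → ℝ))) (fun P => (hmeas p P P.2).1)
      (fun P P' hne => hdisj p P.2 P'.2 fun h => hne (Subtype.ext h))
    have huniv : {P : S p | 0 < volume (P : Set (Fin n → ℝ))} = Set.univ :=
      Set.eq_univ_of_forall fun P => (hmeas p P P.2).2.1
    rw [huniv] at h
    exact Set.countable_univ_iff.1 h
  refine ⟨Σ p, S p, inferInstance, fun q => (q.2 : Set (Fin n → ℝ)),
    fun q => hmeas q.1 q.2 q.2.2, ?_, fun x => sum_band_le S hdisj hbd x⟩
  intro x
  by_cases h0 : grad1Abs n u x = 0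
  · rw [h0]; simp
  obtain ⟨i, hi0, hi⟩ := exists_large_pderiv u x h0
  set v := |pderiv1 n i u x| with hv
  set k := Int.log 2 v with hk
  have h3 : ((2 : ℕ) : ℝ) ^ k ≤ v := Int.zpow_log_le_self (by norm_num) hi0
  have h4 : v < ((2 : ℕ) : ℝ) ^ (k + 1) := Int.lt_zpow_succ_log_self (by norm_num) v
  push_cast at h3 h4
  rw [zpow_add_one₀ (by norm_num), mul_comm] at h4
  obtain ⟨P, hP, hxP⟩ := hcov (i, k) x h3 h4.le
  obtain ⟨A, B, hA0, hB0, hA, hB, hAB⟩ := havg (i, k) P hP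
  have harith := final_arith (Finset.sum_nonneg fun _ _ => abs_nonneg _ : 0 ≤ grad1Abs n u x)
    (Nat.cast_nonneg n) hi hi0 h4.le hAB
  refine (ENNReal.ofReal_le_ofReal harith).trans ?_
  rw [ENNReal.ofReal_mul (by positivity), ENNReal.ofReal_mul hA0, ← mul_assoc]
  have hterm : ∀ (f : (Fin n → ℝ) → ℝ) (c : ℝ), c ≤ ⨍ t in P, f t →
      ENNReal.ofReal c ≤ ∑' q : (Σ p, S p), ENNReal.ofReal (⨍ t in (q.2 : Set (Fin n → ℝ)), f t)
        * (q.2 : Set (Fin n → ℝ)).indicator (fun _ => (1 : ℝ≥0∞)) x := by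
    intro f c hc
    refine le_trans ?_ (ENNReal.le_tsum (⟨(i, k), ⟨P, hP⟩⟩ : Σ p, S p))
    simp only [Set.indicator_of_mem hxP, mul_one]
    exact ENNReal.ofReal_le_ofReal hc
  gcongr
  · exact hterm _ _ hA
  · exact hterm _ _ hB
end
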